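/- arXiv:1806.00279 — 3 statements merged into one kernel-verified Lean document; each statement's English description precedes it below -/
import Mathlib

section
/- For q ≥ 5 and k ≥ 2, 2·(1 + 3/q)·((q^k − 1)/(q − 1))·((q^{k−1} − 1)/(q^{2k−1} − 1)) < 1. -/
/-- The Section 4 inequality `2f < [2k-1 choose k-1]_q`: for integers `q ≥ 5`, `k ≥ 2`,
`2·(1 + 3/q)·((q^k-1)/(q-1))·((q^{k-1}-1)/(q^{2k-1}-1)) < 1`. -/
theorem section4_first_inequality (q k : ℕ) (hq : 5 ≤ q) (hk : 2 ≤ k) :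
    2 * (1 + 3 / (q : ℚ)) * (((q : ℚ) ^ k - 1) / ((q : ℚ) - 1)) *
      (((q : ℚ) ^ (k - 1) - 1) / ((q : ℚ) ^ (2 * k - 1) - 1)) < 1 := by
  obtain ⟨m, rfl⟩ : ∃ m, k = m + 1 := ⟨k - 1, by omega⟩
  have hx : (5 : ℚ) ≤ (q : ℚ) := by exact_mod_cast hq
  generalize (q : ℚ) = x at hx
  have e1 : x ^ (m + 1) = x * x ^ m := by ring
  have e2 : x ^ (2 * (m + 1) - 1) = x * (x ^ m) ^ 2 := by
    rw [show 2 * (m + 1) - 1 = 2 * m + 1 by omega]; ring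
  rw [e1, e2, Nat.add_sub_cancel]
  have ha : 1 ≤ x ^ m := one_le_pow₀ (by linarith)
  generalize x ^ m = a at ha
  have hx0 : 0 < x := by linarith
  have hx1 : 0 < x - 1 := by linarith
  have hD : 0 < x * a ^ 2 - 1 := by nlinarith
  have h1 : (x * a - 1) * (a - 1) ≤ x * a ^ 2 - 1 := by nlinarith
  have h2 : 2 * (x + 3) < x * (x - 1) := by nlinarith
  have e : 2 * (1 + 3 / x) * ((x * a - 1) / (x - 1)) * ((a - 1) / (x * a ^ 2 - 1))
      = (2 * (x + 3) * ((x * a - 1) * (a - 1))) / (x * (x - 1) * (x * a ^ 2 - 1)) := by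
    have := hx0.ne'
    have := hx1.ne'
    have := hD.ne'
    field_simp
  rw [e, div_lt_one (by positivity)]
  calc 2 * (x + 3) * ((x * a - 1) * (a - 1)) ≤ 2 * (x + 3) * (x * a ^ 2 - 1) :=
        mul_le_mul_of_nonneg_left h1 (by positivity)
    _ < x * (x - 1) * (x * a ^ 2 - 1) := mul_lt_mul_of_pos_right h2 hD
end

section
/- Let q ≥ 3, k ≥ 5, and let Y be an intersecting family of k-dimensional subspaces of F_q^{2k} with |Y| ≥ (1 + 3q^{−1})·[k choose 1]_q·[2k−2 choose k−2]_q, where Y is not contained in a dictator or the dual of a dictator. Then no point (1-dimensional subspace) of F_q^{2k} lies in more than (q^{3−k}·[k choose 1]_q + 1)·[2k−2 choose k−2]_q members of Y. -/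
/-- The Gaussian binomial coefficient `[n choose k]_q`. -/
def gaussBinom (q n k : ℕ) : ℚ :=
  ∏ i ∈ Finset.range k, ((q : ℚ) ^ (n - i) - 1) / ((q : ℚ) ^ (i + 1) - 1)

namespace BadPoint

open Finset Module

lemma gb_succ (q n k : ℕ) :
    gaussBinom q (n + 1) (k + 1) =
      gaussBinom q n k * (((q : ℚ) ^ (n + 1) - 1) / ((q : ℚ) ^ (k + 1) - 1)) := by
  unfold gaussBinom
  rw [Finset.prod_div_distrib, Finset.prod_div_distrib, Finset.prod_range_succ',
    Finset.prod_range_succ (fun i => (q : ℚ) ^ (i + 1) - 1)]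
  simp only [Nat.add_sub_add_right, Nat.sub_zero]
  rw [div_mul_div_comm]

lemma gb_zero (q n : ℕ) : gaussBinom q n 0 = 1 := by simp [gaussBinom]

lemma gb_one (q n : ℕ) : gaussBinom q n 1 = ((q : ℚ) ^ n - 1) / ((q : ℚ) - 1) := by
  simp [gaussBinom]

lemma gb_nonneg (q n k : ℕ) (hq : 2 ≤ q) : 0 ≤ gaussBinom q n k := by
  unfold gaussBinom
  apply Finset.prod_nonneg
  intro i _
  have hq' : (1 : ℚ) ≤ q := by exact_mod_cast (by omega : 1 ≤ q)
  have := one_le_pow₀ hq' (n := n - i)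
  have := one_le_pow₀ hq' (n := i + 1)
  apply div_nonneg <;> linarith

section
open Classical
variable {F : Type} [Field F] [Fintype F] {V : Type} [AddCommGroup V] [Module F V] [Fintype V]
  [Fintype (Submodule F V)]

lemma card_mem (X : Submodule F V) :
    ((univ.filter fun v => v ∈ X).card : ℚ) = (Fintype.card F : ℚ) ^ finrank F X := by
  have h := Module.card_eq_pow_finrank (K := F) (V := X)
  rw [← Fintype.card_subtype]
  exact_mod_cast h

lemma card_mem_diff (X R : Submodule F V) (h : X ≤ R) :
    (((univ.filter fun v => v ∉ X).filter fun v => v ∈ R).card : ℚ)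
      = (Fintype.card F : ℚ) ^ finrank F R - (Fintype.card F : ℚ) ^ finrank F X := by
  rw [← card_mem X, ← card_mem R]
  have h1 := Finset.card_filter_add_card_filter_not (s := univ.filter fun v => v ∈ R) (fun v => v ∈ X)
  rw [Finset.filter_filter, Finset.filter_filter] at h1
  have h2 : (univ.filter fun v => v ∈ R ∧ v ∈ X) = univ.filter fun v => v ∈ X := by
    ext v
    simp only [mem_filter, mem_univ, true_and]
    exact ⟨fun h => h.2, fun hv => ⟨h hv, hv⟩⟩
  have h3 : ((univ.filter fun v => v ∉ X).filter fun v => v ∈ R)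
      = univ.filter fun v => v ∈ R ∧ v ∉ X := by
    ext v
    simp only [mem_filter, mem_univ, true_and]
    tauto
  rw [h2] at h1
  rw [h3, ← h1]; push_cast; ring

lemma finrank_sup_span (X : Submodule F V) (v : V) (hv : v ∉ X) :
    finrank F (X ⊔ Submodule.span F {v} : Submodule F V) = finrank F X + 1 := by
  have h := Submodule.finrank_sup_add_finrank_inf_eq X (Submodule.span F {v})
  have h0 : v ≠ 0 := fun h => hv (h ▸ X.zero_mem)
  rw [finrank_span_singleton h0] at h
  have : X ⊓ Submodule.span F {v} = ⊥ := by
    have : Disjoint (Submodule.span F {v}) X := (Submodule.disjoint_span_singleton' h0).2 hv |>.symm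
    exact this.symm.eq_bot
  rw [this, finrank_bot] at h
  omega

lemma double_count {α β : Type} (s : Finset α) (t : Finset β) (r : α → β → Prop) (g : β → ℚ) :
    ∑ a ∈ s, ∑ b ∈ t.filter (fun b => r a b), g b
      = ∑ b ∈ t, ((s.filter (fun a => r a b)).card : ℚ) * g b := by
  simp only [Finset.sum_filter]
  rw [Finset.sum_comm]
  refine Finset.sum_congr rfl fun b _ => ?_
  rw [← Finset.sum_filter, Finset.sum_const, nsmul_eq_mul]

lemma filter_sup_span (X : Submodule F V) (v : V) (e : ℕ) :
    (univ.filter (fun R : Submodule F V => X ≤ R ∧ finrank F R = e)).filter (fun R => v ∈ R)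
      = univ.filter (fun R : Submodule F V => X ⊔ Submodule.span F {v} ≤ R ∧ finrank F R = e) := by
  ext R
  simp only [mem_filter, mem_univ, true_and, sup_le_iff, Submodule.span_singleton_le_iff_mem]
  tauto

lemma card_containing (e : ℕ) (he : e ≤ finrank F V) : ∀ (j : ℕ) (X : Submodule F V),
    finrank F X + j = e →
    ((univ.filter fun R : Submodule F V => X ≤ R ∧ finrank F R = e).card : ℚ)
      = gaussBinom (Fintype.card F) (finrank F V - finrank F X) j := by
  intro j
  induction j with
  | zero =>
    intro X hX
    rw [gb_zero]
    have : (univ.filter fun R : Submodule F V => X ≤ R ∧ finrank F R = e) = {X} := by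
      ext R
      simp only [mem_filter, mem_univ, true_and, mem_singleton]
      constructor
      · rintro ⟨h1, h2⟩
        exact (Submodule.eq_of_le_of_finrank_eq h1 (by omega)).symm
      · rintro rfl
        exact ⟨le_rfl, by omega⟩
    rw [this]; simp
  | succ j ih =>
    intro X hX
    set q := Fintype.card F with hq
    have hq1 : (1 : ℚ) < q := by exact_mod_cast Fintype.one_lt_card
    have key := double_count (univ.filter (fun R : Submodule F V => X ≤ R ∧ finrank F R = e))
      (univ.filter (fun v => v ∉ X)) (fun R v => v ∈ R) (fun _ => 1)
    have hL : ∀ R ∈ univ.filter (fun R : Submodule F V => X ≤ R ∧ finrank F R = e),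
        (∑ v ∈ (univ.filter (fun v => v ∉ X)).filter (fun v => v ∈ R), (1 : ℚ))
          = (q : ℚ) ^ e - (q : ℚ) ^ finrank F X := by
      intro R hR
      simp only [mem_filter, mem_univ, true_and] at hR
      rw [Finset.sum_const, nsmul_eq_mul, mul_one, card_mem_diff X R hR.1, hR.2]
    have hR : ∀ v ∈ univ.filter (fun v => v ∉ X),
        (((univ.filter (fun R : Submodule F V => X ≤ R ∧ finrank F R = e)).filter
          (fun R => v ∈ R)).card : ℚ) * 1
          = gaussBinom q (finrank F V - finrank F X - 1) j := by
      intro v hv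
      simp only [mem_filter, mem_univ, true_and] at hv
      have hf := finrank_sup_span X v hv
      have := ih (X ⊔ Submodule.span F {v}) (by omega)
      rw [hf, ← Nat.sub_sub] at this
      rw [mul_one, ← this, filter_sup_span]
    rw [Finset.sum_congr rfl hL, Finset.sum_congr rfl hR, Finset.sum_const, Finset.sum_const,
      nsmul_eq_mul, nsmul_eq_mul] at key
    have hD : ((univ.filter (fun v => v ∉ X)).card : ℚ)
        = (q : ℚ) ^ finrank F V - (q : ℚ) ^ finrank F X := by
      have := card_mem_diff X ⊤ le_top
      simpa using this
    rw [hD] at key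
    obtain ⟨m, hm⟩ : ∃ m, finrank F V = finrank F X + (m + 1) :=
      ⟨finrank F V - finrank F X - 1, by omega⟩
    have e1 : finrank F V - finrank F X - 1 = m := by omega
    have e2 : finrank F V - finrank F X = m + 1 := by omega
    rw [e1] at key
    rw [e2, gb_succ, mul_div_assoc', eq_div_iff (by
      have := one_lt_pow₀ hq1 (Nat.succ_ne_zero j)
      simp only [Nat.succ_eq_add_one] at this
      linarith)]
    rw [hm, ← hX, pow_add, pow_add] at key
    have hx : (0 : ℚ) < (q : ℚ) ^ finrank F X := by positivity
    apply mul_left_cancel₀ hx.ne'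
    rw [hX] at key
    linear_combination key

lemma design (p : Submodule F V) (hp : finrank F p = 1) (e : ℕ) (he : e + 3 ≤ finrank F V)
    (A : Finset (Submodule F V)) (hA : ∀ R ∈ A, p ≤ R ∧ finrank F R = e + 3) (x : V → ℚ) (μ : ℚ)
    (hx : ∀ v, x v = ((A.filter fun R => v ∈ R).card : ℚ) - μ)
    (hsum : ∑ v ∈ univ.filter (fun v => v ∉ p), x v = 0) :
    ∑ v ∈ univ.filter (fun v => v ∉ p), x v ^ 2
      ≤ ((Fintype.card F : ℚ) ^ 2 - Fintype.card F) *
        gaussBinom (Fintype.card F) (finrank F V - 2) (e + 1) * A.card := by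
  set D := univ.filter (fun v => v ∉ p) with hD
  set q := Fintype.card F with hq
  have hq1 : 1 < q := Fintype.one_lt_card
  have hq1' : (1 : ℚ) < q := by exact_mod_cast hq1
  set r := gaussBinom q (finrank F V - 2) (e + 1) with hr
  set l := gaussBinom q (finrank F V - 3) e with hl
  have hl0 : 0 ≤ l := gb_nonneg q _ _ hq1
  set U := univ.filter (fun R : Submodule F V => p ≤ R ∧ finrank F R = e + 3) with hU
  let G : Submodule F V → ℚ := fun R => ∑ v ∈ D.filter (fun v => v ∈ R), x v
  have s1 : ∑ R ∈ A, G R = ∑ v ∈ D, x v ^ 2 := by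
    have h := double_count A D (fun R v => v ∈ R) x
    have h2 : ∑ v ∈ D, ((A.filter fun R => v ∈ R).card : ℚ) * x v
        = ∑ v ∈ D, x v ^ 2 + μ * ∑ v ∈ D, x v := by
      rw [Finset.mul_sum, ← Finset.sum_add_distrib]
      refine Finset.sum_congr rfl fun v _ => ?_
      rw [hx v]; ring
    rw [h2, hsum] at h
    simpa [G] using h
  have hnum : ∀ v ∈ D, ∀ w ∈ D,
      (((U.filter fun R => v ∈ R).filter fun R => w ∈ R).card : ℚ)
        = l + if w ∈ p ⊔ Submodule.span F {v} then r - l else 0 := by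
    intro v hv w hw
    simp only [hD, mem_filter, mem_univ, true_and] at hv hw
    rw [hU, filter_sup_span]
    have hf := finrank_sup_span p v hv
    split_ifs with h
    · have hc := card_containing (F := F) (V := V) (e + 3) he (e + 1) (p ⊔ Submodule.span F {v})
        (by omega)
      rw [hf, hp] at hc
      rw [Finset.filter_true_of_mem]
      · rw [hc]; ring
      · intro R hR
        simp only [mem_filter, mem_univ, true_and] at hR
        exact hR.1 h
    · have hf' := finrank_sup_span _ w h
      rw [filter_sup_span]
      have hc := card_containing (F := F) (V := V) (e + 3) he e
        (p ⊔ Submodule.span F {v} ⊔ Submodule.span F {w}) (by omega)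
      rw [hf', hf, hp] at hc
      rw [hc]; ring
  have hinv : ∀ v ∈ D, ∀ w ∈ D.filter (fun w => w ∈ p ⊔ Submodule.span F {v}), x w = x v := by
    intro v hv w hw
    simp only [hD, mem_filter, mem_univ, true_and] at hv hw
    have hle : p ⊔ Submodule.span F {w} ≤ p ⊔ Submodule.span F {v} :=
      sup_le le_sup_left ((Submodule.span_singleton_le_iff_mem _ _).2 hw.2)
    have heq := Submodule.eq_of_le_of_finrank_eq hle
      (by rw [finrank_sup_span p v hv, finrank_sup_span p w hw.1])
    have hvw : v ∈ p ⊔ Submodule.span F {w} := by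
      rw [heq]; exact le_sup_right (a := p) (Submodule.mem_span_singleton_self v)
    rw [hx, hx]
    congr 3
    apply Finset.filter_congr
    intro R hR
    have hpR := (hA R hR).1
    constructor
    · intro h
      exact (sup_le hpR ((Submodule.span_singleton_le_iff_mem _ _).2 h)) hvw
    · intro h
      exact (sup_le hpR ((Submodule.span_singleton_le_iff_mem _ _).2 h)) hw.2
  have s2 : ∑ R ∈ U, G R ^ 2 = (r - l) * ((q : ℚ) ^ 2 - q) * ∑ v ∈ D, x v ^ 2 := by
    have h1 : ∑ R ∈ U, G R ^ 2 = ∑ v ∈ D, x v * ∑ R ∈ U.filter (fun R => v ∈ R), G R := by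
      simp only [Finset.mul_sum]
      simp only [Finset.sum_filter]
      rw [Finset.sum_comm]
      refine Finset.sum_congr rfl fun R _ => ?_
      rw [sq]
      conv_lhs => rw [show G R = ∑ v ∈ D.filter (fun v => v ∈ R), x v from rfl, Finset.sum_mul]
      rw [Finset.sum_filter]
    rw [h1, Finset.mul_sum]
    refine Finset.sum_congr rfl fun v hv => ?_
    have h2 := double_count (U.filter fun R => v ∈ R) D (fun R w => w ∈ R) x
    have h3 : ∑ w ∈ D, (((U.filter fun R => v ∈ R).filter fun R => w ∈ R).card : ℚ) * x w
        = (r - l) * ((q : ℚ) ^ 2 - q) * x v := by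
      rw [Finset.sum_congr rfl (fun w hw => by rw [hnum v hv w hw])]
      simp only [add_mul, Finset.sum_add_distrib, ← Finset.mul_sum, hsum, ite_mul, zero_mul]
      rw [← Finset.sum_filter, Finset.sum_congr rfl (fun w hw => by rw [hinv v hv w hw]),
        Finset.sum_const, nsmul_eq_mul]
      have hc := card_mem_diff p (p ⊔ Submodule.span F {v}) le_sup_left
      rw [finrank_sup_span p v (by simpa [hD] using hv), hp] at hc
      rw [hc, hq]
      ring
    have h4 : ∑ R ∈ U.filter (fun R => v ∈ R), G R = (r - l) * ((q : ℚ) ^ 2 - q) * x v := by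
      rw [← h3, ← h2]
    rw [h4]; ring
  have hAU : A ⊆ U := by
    intro R hR
    simpa [hU] using hA R hR
  have cs := sq_sum_le_card_mul_sum_sq (s := A) (f := G)
  have hle : ∑ R ∈ A, G R ^ 2 ≤ ∑ R ∈ U, G R ^ 2 :=
    Finset.sum_le_sum_of_subset_of_nonneg hAU (fun _ _ _ => sq_nonneg _)
  rw [s1] at cs
  rw [s2] at hle
  set Q := ∑ v ∈ D, x v ^ 2 with hQ
  have hQ0 : 0 ≤ Q := Finset.sum_nonneg fun _ _ => sq_nonneg _
  have hqq : 0 ≤ (q : ℚ) ^ 2 - q := by nlinarith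
  have hr0 : 0 ≤ r := gb_nonneg q _ _ hq1
  rcases hQ0.eq_or_lt with h | h
  · rw [← h]; positivity
  · have hA0 : (0 : ℚ) ≤ A.card := by positivity
    have h5 : Q ^ 2 ≤ ((q : ℚ) ^ 2 - q) * r * A.card * Q := by
      have h6 : (A.card : ℚ) * ∑ R ∈ A, G R ^ 2
          ≤ A.card * ((r - l) * ((q : ℚ) ^ 2 - q) * Q) := mul_le_mul_of_nonneg_left hle hA0
      have h7 : 0 ≤ (A.card : ℚ) * (l * ((q : ℚ) ^ 2 - q) * Q) := by positivity
      nlinarith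
    rw [sq] at h5
    exact le_of_mul_le_mul_right h5 h

lemma center (p : Submodule F V) (hp : finrank F p = 1) (e : ℕ) (he : e + 3 ≤ finrank F V)
    (A : Finset (Submodule F V)) (hA : ∀ R ∈ A, p ≤ R ∧ finrank F R = e + 3) (μ : ℚ)
    (hμ : μ * ((Fintype.card F : ℚ) ^ finrank F V - Fintype.card F)
      = A.card * ((Fintype.card F : ℚ) ^ (e + 3) - Fintype.card F)) :
    ∑ v ∈ univ.filter (fun v => v ∉ p), (((A.filter fun R => v ∈ R).card : ℚ) - μ) = 0 := by
  have h := double_count A (univ.filter (fun v => v ∉ p)) (fun R v => v ∈ R) (fun _ => 1)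
  have h1 : ∀ R ∈ A, (∑ v ∈ (univ.filter (fun v => v ∉ p)).filter (fun v => v ∈ R), (1 : ℚ))
      = (Fintype.card F : ℚ) ^ (e + 3) - Fintype.card F := by
    intro R hR
    rw [Finset.sum_const, nsmul_eq_mul, mul_one, card_mem_diff p R (hA R hR).1, (hA R hR).2, hp,
      pow_one]
  have hD : ((univ.filter (fun v => v ∉ p)).card : ℚ)
      = (Fintype.card F : ℚ) ^ finrank F V - Fintype.card F := by
    have := card_mem_diff p ⊤ le_top
    simpa [hp] using this
  rw [Finset.sum_congr rfl h1, Finset.sum_const, nsmul_eq_mul] at h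
  simp only [mul_one] at h
  rw [Finset.sum_sub_distrib, ← h, Finset.sum_const, nsmul_eq_mul, hD]
  linarith

lemma cross_end (q a b rA rB P : ℚ) (hq2' : 2 ≤ q) (ha0 : 0 ≤ a) (hb0 : 0 ≤ b) (hrA0 : 0 ≤ rA)
    (hrB0 : 0 ≤ rB) (hPl : (q ^ 2 - 2 * q) * (a * b) ≤ P)
    (hPu : P ^ 2 ≤ ((q ^ 2 - q) * rA * a) * ((q ^ 2 - q) * rB * b)) :
    (q - 2) ^ 2 * (a * b) ≤ (q - 1) ^ 2 * (rA * rB) := by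
  have hl0 : 0 ≤ (q ^ 2 - 2 * q) * (a * b) := mul_nonneg (by nlinarith) (by positivity)
  have hfin : ((q ^ 2 - 2 * q) * (a * b)) ^ 2 ≤ ((q ^ 2 - q) * rA * a) * ((q ^ 2 - q) * rB * b) :=
    (pow_le_pow_left₀ hl0 hPl 2).trans hPu
  rcases (mul_nonneg ha0 hb0).eq_or_lt with h | h
  · rw [← h, mul_zero]; positivity
  · have hq0 : 0 < q ^ 2 * (a * b) := by positivity
    refine le_of_mul_le_mul_left ?_ hq0
    linarith [hfin]

set_option maxHeartbeats 1000000 in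
lemma cross (p : Submodule F V) (hp : finrank F p = 1) (e : ℕ) (hn : finrank F V = 2 * (e + 3))
    (hq2 : 2 ≤ Fintype.card F)
    (A B : Finset (Submodule F V)) (hA : ∀ R ∈ A, p ≤ R ∧ finrank F R = e + 3)
    (hB : ∀ R ∈ B, p ≤ R ∧ finrank F R = e + 1 + 3)
    (hAB : ∀ R ∈ A, ∀ T ∈ B, ¬ (R ⊓ T ≤ p)) :
    ((Fintype.card F : ℚ) - 2) ^ 2 * (A.card * B.card) ≤
      ((Fintype.card F : ℚ) - 1) ^ 2 * (gaussBinom (Fintype.card F) (2 * (e + 3) - 2) (e + 1) *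
        gaussBinom (Fintype.card F) (2 * (e + 3) - 2) (e + 1 + 1)) := by
  have dA := design p hp e (by omega) A hA
  have dB := design p hp (e + 1) (by omega) B hB
  have cA := center p hp e (by omega) A hA
  have cB := center p hp (e + 1) (by omega) B hB
  have hD : ((univ.filter (fun v => v ∉ p)).card : ℚ)
      = (Fintype.card F : ℚ) ^ finrank F V - Fintype.card F := by
    have := card_mem_diff p ⊤ le_top
    simpa [hp] using this
  have hcard : ∀ R ∈ A, ∀ T ∈ B, ((Fintype.card F : ℚ) ^ 2 - Fintype.card F) ≤
      ((((univ.filter (fun v => v ∉ p)).filter (fun v => v ∈ R)).filter fun v => v ∈ T).card : ℚ) := by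
    intro R hR T hT
    obtain ⟨u, hu, hup⟩ := SetLike.not_le_iff_exists.1 (hAB R hR T hT)
    have hc := card_mem_diff p (p ⊔ Submodule.span F {u}) le_sup_left
    rw [finrank_sup_span p u hup, hp, pow_one] at hc
    norm_num at hc
    rw [← hc]
    norm_cast
    apply Finset.card_le_card
    intro v hv
    simp only [mem_filter, mem_univ, true_and] at hv ⊢
    refine ⟨⟨hv.1, ?_⟩, ?_⟩
    · exact (sup_le (hA R hR).1 ((Submodule.span_singleton_le_iff_mem _ _).2 hu.1)) hv.2
    · exact (sup_le (hB T hT).1 ((Submodule.span_singleton_le_iff_mem _ _).2 hu.2)) hv.2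
  set D := univ.filter (fun v => v ∉ p) with hDdef
  set q : ℚ := (Fintype.card F : ℚ) with hq
  have hq2' : 2 ≤ q := by rw [hq]; exact_mod_cast hq2
  rw [hn] at hD dA dB cA cB
  set rA := gaussBinom (Fintype.card F) (2 * (e + 3) - 2) (e + 1) with hrA
  set rB := gaussBinom (Fintype.card F) (2 * (e + 3) - 2) (e + 1 + 1) with hrB
  set a : ℚ := (A.card : ℚ) with ha
  set b : ℚ := (B.card : ℚ) with hb
  have ha0 : 0 ≤ a := by rw [ha]; positivity
  have hb0 : 0 ≤ b := by rw [hb]; positivity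
  have hrA0 : 0 ≤ rA := gb_nonneg _ _ _ hq2
  have hrB0 : 0 ≤ rB := gb_nonneg _ _ _ hq2
  set w : ℚ := q ^ (2 * (e + 3)) - q with hw
  have hw0 : 0 < w := by
    have : q ^ 1 < q ^ (2 * (e + 3)) := pow_lt_pow_right₀ (by linarith) (by omega)
    rw [pow_one] at this
    linarith
  set μ : ℚ := a * (q ^ (e + 3) - q) / w with hμ
  set ν : ℚ := b * (q ^ (e + 1 + 3) - q) / w with hν
  have xA := cA μ (by rw [hμ]; field_simp)
  have xB := cB ν (by rw [hν]; field_simp)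
  have sA := dA (fun v => ((A.filter fun R => v ∈ R).card : ℚ) - μ) μ (fun _ => rfl) xA
  have sB := dB (fun v => ((B.filter fun R => v ∈ R).card : ℚ) - ν) ν (fun _ => rfl) xB
  have cs := Finset.sum_mul_sq_le_sq_mul_sq D
    (fun v => ((A.filter fun R => v ∈ R).card : ℚ) - μ)
    (fun v => ((B.filter fun R => v ∈ R).card : ℚ) - ν)
  set P := ∑ v ∈ D, ((((A.filter fun R => v ∈ R).card : ℚ) - μ) *
    (((B.filter fun R => v ∈ R).card : ℚ) - ν)) with hP
  have hPeq : ∑ v ∈ D, ((A.filter fun R => v ∈ R).card : ℚ) * ((B.filter fun R => v ∈ R).card : ℚ)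
      = P + w * μ * ν := by
    have : ∀ v ∈ D, ((A.filter fun R => v ∈ R).card : ℚ) * ((B.filter fun R => v ∈ R).card : ℚ)
        = ((((A.filter fun R => v ∈ R).card : ℚ) - μ) * (((B.filter fun R => v ∈ R).card : ℚ) - ν))
        + ν * (((A.filter fun R => v ∈ R).card : ℚ) - μ)
        + μ * (((B.filter fun R => v ∈ R).card : ℚ) - ν) + μ * ν := by
      intro v _; ring
    rw [Finset.sum_congr rfl this, Finset.sum_add_distrib, Finset.sum_add_distrib,
      Finset.sum_add_distrib, ← Finset.mul_sum, ← Finset.mul_sum, xA, xB, Finset.sum_const,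
      nsmul_eq_mul, hD]
    ring
  have hlow : (q ^ 2 - q) * (a * b) ≤ P + w * μ * ν := by
    rw [← hPeq, ← double_count A D (fun R v => v ∈ R)]
    have : ∀ R ∈ A, (q ^ 2 - q) * b ≤
        ∑ v ∈ D.filter (fun v => v ∈ R), ((B.filter fun T => v ∈ T).card : ℚ) := by
      intro R hR
      have h := double_count B (D.filter (fun v => v ∈ R)) (fun T v => v ∈ T) (fun _ => 1)
      simp only [mul_one] at h
      rw [← h]
      have h2 := Finset.card_nsmul_le_sum B
        (fun T => ∑ v ∈ (D.filter (fun v => v ∈ R)).filter (fun v => v ∈ T), (1 : ℚ))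
        (q ^ 2 - q) (by
          intro T hT
          have := hcard R hR T hT
          simpa using this)
      rw [nsmul_eq_mul] at h2
      linarith
    have h2 := Finset.card_nsmul_le_sum A _ _ this
    rw [nsmul_eq_mul] at h2
    linarith
  have hmean : w * μ * ν ≤ q * (a * b) := by
    have e1 : w * μ * ν = (a * b) * ((q ^ (e + 3) - q) * (q ^ (e + 1 + 3) - q) / w) := by
      rw [hμ, hν]; field_simp
    rw [e1, mul_comm q]
    apply mul_le_mul_of_nonneg_left _ (by positivity)
    rw [div_le_iff₀ hw0, hw]
    set s := q ^ (e + 2) with hs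
    have h1 : q ^ (e + 3) = q * s := by rw [hs]; ring
    have h2 : q ^ (e + 1 + 3) = q ^ 2 * s := by rw [hs]; ring
    have h3 : q ^ (2 * (e + 3)) = q ^ 2 * s ^ 2 := by rw [hs]; ring
    have hs1 : 1 ≤ s := one_le_pow₀ (by linarith)
    rw [h1, h2, h3]
    have : q ^ 2 * s + q ^ 3 * s - 2 * q ^ 2 ≥ 0 := by
      nlinarith [mul_le_mul_of_nonneg_left hs1 (sq_nonneg q),
        mul_le_mul_of_nonneg_left hs1 (by positivity : 0 ≤ q ^ 3), pow_le_pow_right₀ (by linarith : 1 ≤ q) (by norm_num : 2 ≤ 3)]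
    nlinarith
  have hPl : (q ^ 2 - 2 * q) * (a * b) ≤ P := by linarith
  have hPu : P ^ 2 ≤ ((q ^ 2 - q) * rA * a) * ((q ^ 2 - q) * rB * b) := by
    refine cs.trans (mul_le_mul sA sB (Finset.sum_nonneg fun _ _ => sq_nonneg _) ?_)
    have : 0 ≤ q ^ 2 - q := by nlinarith
    positivity
  clear_value P a b rA rB
  exact cross_end q a b rA rB P hq2' ha0 hb0 hrA0 hrB0 hPl hPu

lemma fiber (p X : Submodule F V) (hp : finrank F p = 1) (k : ℕ) (hX : finrank F X = k + 1)
    (Z : Finset (Submodule F V)) (hZ : ∀ T ∈ Z, T ⊔ p = X ∧ finrank F T = k) :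
    Z.card ≤ Fintype.card F ^ k := by
  rcases Z.eq_empty_or_nonempty with rfl | ⟨T0, hT0⟩
  · simp
  obtain ⟨h0, h0'⟩ := hZ T0 hT0
  let b := Module.finBasis F T0
  have hex : ∀ T ∈ Z, ∀ i, ∃ y : p, ((b i : T0) : V) - (y : V) ∈ T := by
    intro T hT i
    have : ((b i : T0) : V) ∈ T ⊔ p := by
      rw [(hZ T hT).1, ← h0]
      exact le_sup_left (b := p) (b i).2
    obtain ⟨t, ht, y, hy, hty⟩ := Submodule.mem_sup.1 this
    refine ⟨⟨y, hy⟩, ?_⟩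
    rw [← hty]; simpa using ht
  choose! f hf using hex
  have hcard : (univ : Finset (Fin (finrank F T0) → p)).card = Fintype.card F ^ k := by
    rw [Finset.card_univ, Fintype.card_fun, Fintype.card_fin, h0',
      Module.card_eq_pow_finrank (K := F) (V := p), hp, pow_one]
  rw [← hcard]
  apply Finset.card_le_card_of_injOn f (fun _ _ => Finset.mem_univ _)
  intro T1 h1 T2 h2 h12
  have h1 : T1 ∈ Z := h1
  have h2 : T2 ∈ Z := h2
  have hle : T0 ≤ (T1 ⊓ T2) ⊔ p := by
    have hspan : T0 = Submodule.span F (Set.range fun i => ((b i : T0) : V)) := by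
      have := b.span_eq
      have h3 := congrArg (Submodule.map T0.subtype) this
      rw [Submodule.map_span, Submodule.map_top, Submodule.range_subtype, ← Set.range_comp] at h3
      exact h3.symm
    rw [hspan, Submodule.span_le]
    rintro _ ⟨i, rfl⟩
    refine Submodule.mem_sup.2 ⟨((b i : T0) : V) - (f T1 i : V), ⟨hf T1 h1 i, ?_⟩, (f T1 i : V),
      (f T1 i).2, by simp⟩
    rw [h12]; exact hf T2 h2 i
  have hXle : X ≤ (T1 ⊓ T2) ⊔ p := by
    rw [← h0]; exact sup_le hle le_sup_right
  have hd := Submodule.finrank_mono hXle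
  have hd2 := Submodule.finrank_add_le_finrank_add_finrank (T1 ⊓ T2) p
  have e1 : T1 ⊓ T2 = T1 := by
    apply Submodule.eq_of_le_of_finrank_le inf_le_left
    rw [(hZ T1 h1).2]; omega
  have e2 : T1 ⊓ T2 = T2 := by
    apply Submodule.eq_of_le_of_finrank_le inf_le_right
    rw [(hZ T2 h2).2]; omega
  exact e1.symm.trans e2

lemma point_disj (p T : Submodule F V) (hp : finrank F p = 1) (h : ¬ p ≤ T) : T ⊓ p = ⊥ := by
  by_contra hne
  have h1 : T ⊓ p = p := by
    apply Submodule.eq_of_le_of_finrank_le inf_le_right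
    rw [hp]
    exact Nat.one_le_iff_ne_zero.2 fun h0 => hne (Submodule.finrank_eq_zero.1 h0)
  exact h (h1 ▸ inf_le_left)

lemma hm (p T : Submodule F V) (hp : finrank F p = 1) (e : ℕ) (he : e + 3 ≤ finrank F V)
    (hT : finrank F T = e + 3) (hpT : ¬ p ≤ T)
    (A : Finset (Submodule F V)) (hA : ∀ R ∈ A, p ≤ R ∧ finrank F R = e + 3)
    (hAT : ∀ R ∈ A, R ⊓ T ≠ ⊥) :
    ((Fintype.card F : ℚ) - 1) * A.card ≤ ((Fintype.card F : ℚ) ^ (e + 3) - 1) *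
      gaussBinom (Fintype.card F) (finrank F V - 2) (e + 1) := by
  set D := (univ.filter fun v => v ∉ (⊥ : Submodule F V)).filter fun v => v ∈ T with hD
  have hDc : (D.card : ℚ) = (Fintype.card F : ℚ) ^ (e + 3) - 1 := by
    rw [hD, card_mem_diff ⊥ T bot_le, hT]; simp
  have h := double_count A D (fun R v => v ∈ R) (fun _ => 1)
  simp only [mul_one] at h
  have hl : ∀ R ∈ A, (Fintype.card F : ℚ) - 1 ≤ ∑ v ∈ D.filter (fun v => v ∈ R), (1 : ℚ) := by
    intro R hR
    obtain ⟨u, hu, hu0⟩ := Submodule.exists_mem_ne_zero_of_ne_bot (hAT R hR)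
    have hc := card_mem_diff ⊥ (Submodule.span F {u}) bot_le
    rw [finrank_span_singleton hu0, finrank_bot, pow_one, pow_zero] at hc
    rw [← hc, Finset.sum_const, nsmul_eq_mul, mul_one]
    norm_cast
    apply Finset.card_le_card
    intro v hv
    simp only [hD, mem_filter, mem_univ, true_and] at hv ⊢
    refine ⟨⟨hv.1, ?_⟩, ?_⟩
    · exact (Submodule.span_singleton_le_iff_mem _ _).2 hu.2 hv.2
    · exact (Submodule.span_singleton_le_iff_mem _ _).2 hu.1 hv.2
  have hu : ∀ v ∈ D, ((A.filter fun R => v ∈ R).card : ℚ) ≤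
      gaussBinom (Fintype.card F) (finrank F V - 2) (e + 1) := by
    intro v hv
    simp only [hD, mem_filter, mem_univ, true_and, Submodule.mem_bot] at hv
    have hvp : v ∉ p := by
      intro h
      have : v ∈ T ⊓ p := ⟨hv.2, h⟩
      rw [point_disj p T hp hpT] at this
      exact hv.1 this
    have hf := finrank_sup_span p v hvp
    have hc := card_containing (F := F) (V := V) (e + 3) he (e + 1) (p ⊔ Submodule.span F {v})
      (by omega)
    rw [hf, hp] at hc
    norm_num at hc
    rw [← hc]
    norm_cast
    apply Finset.card_le_card
    intro R hR
    simp only [mem_filter, mem_univ, true_and] at hR ⊢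
    exact ⟨⟨(hA R hR.1).1, hR.2⟩, (hA R hR.1).2⟩
  have h1 := Finset.card_nsmul_le_sum A _ _ hl
  have h2 := Finset.sum_le_card_nsmul D _ _ hu
  rw [nsmul_eq_mul] at h1 h2
  rw [hDc] at h2
  linarith


lemma poly (q : ℚ) (hq : 3 ≤ q) : (q - 1) ^ 3 * q ^ 10 <
    (q ^ 3 + q ^ 2 + 2 * q + 1) * (q ^ 4 + 3 * q ^ 3 - q ^ 2 - 1) * (q - 2) ^ 2 * (q ^ 4 - 1) := by
  obtain ⟨t, ht, rfl⟩ : ∃ t : ℚ, 0 ≤ t ∧ q = t + 3 := ⟨q - 3, by linarith, by ring⟩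
  rw [← sub_pos]
  ring_nf
  positivity

set_option maxHeartbeats 1000000 in
lemma numeric (q t a z b G : ℚ) (hq : 3 ≤ q) (ht : 1 ≤ t) (hG : 0 < G) (ha : 0 ≤ a)
    (h1 : (q - 1) * a ≤ (q ^ 5 * t - 1) * G)
    (h2 : (q - 2) ^ 2 * (a * b) ≤ (q - 1) ^ 2 * (G * (G * ((q ^ 5 * t - 1) / (q ^ 4 * t - 1)))))
    (h3 : z ≤ q ^ 5 * t * b)
    (h4 : (1 + 3 / q) * ((q ^ 5 * t - 1) / (q - 1)) * G ≤ a + z) :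
    a ≤ (q ^ 3 / (q ^ 5 * t) * ((q ^ 5 * t - 1) / (q - 1)) + 1) * G := by
  have hq0 : 0 < q := by linarith
  have hq1 : 0 < q - 1 := by linarith
  have hX4 : 81 * t ≤ q ^ 4 * t := by
    apply mul_le_mul_of_nonneg_right _ (by linarith)
    have := pow_le_pow_left₀ (by norm_num) hq 4
    norm_num at this; exact this
  set Y := q ^ 4 * t with hY
  have hYq : q ^ 4 ≤ Y := by rw [hY]; nlinarith [pow_pos hq0 4]
  have hX : q ^ 5 * t = q * Y := by rw [hY]; ring
  clear_value Y
  rw [hX] at h1 h2 h3 h4 ⊢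
  have hY1 : 81 ≤ Y := by linarith
  set K := (q * Y - 1) / (q - 1) with hK
  have hKe : q * Y - 1 = K * (q - 1) := by rw [hK]; field_simp
  -- K ≥ Y
  have hKY : Y ≤ K := by rw [hK, le_div_iff₀ hq1]; nlinarith
  have hK0 : 0 < K := by linarith
  set α := a / G with hα
  have haα : a = α * G := by rw [hα]; field_simp
  have hαK : α ≤ K := by
    rw [haα, hKe] at h1
    have : (q - 1) * G * α ≤ (q - 1) * G * K := by linarith
    exact le_of_mul_le_mul_left this (by positivity)
  set c := q ^ 3 / (q * Y) * K + 1 with hc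
  by_contra hcon
  push Not at hcon
  rw [haα] at hcon
  have hcα : c < α := lt_of_mul_lt_mul_right hcon hG.le
  -- bounds on c
  have hc1 : q ^ 2 + q + 2 + 1 / q ≤ c := by
    rw [hc, hK]
    have : q ^ 3 / (q * Y) * ((q * Y - 1) / (q - 1)) = (q ^ 3 - q ^ 2 / Y) / (q - 1) := by
      field_simp
    rw [this]
    have h5 : q ^ 2 / Y ≤ 1 / q ^ 2 := by
      rw [div_le_div_iff₀ (by linarith) (by positivity)]; nlinarith
    have h6 : q ^ 2 + q + 1 + 1 / q ≤ (q ^ 3 - q ^ 2 / Y) / (q - 1) := by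
      rw [le_div_iff₀ hq1]
      have h7 : (q ^ 2 + q + 1 + 1 / q) * (q - 1) = q ^ 3 - 1 / q := by field_simp; ring
      have h8 : 1 / q ^ 2 ≤ 1 / q := by
        apply one_div_le_one_div_of_le hq0; nlinarith
      rw [h7]; linarith
    linarith
  have hc2 : c ≤ K * (1 / q ^ 2 + 1 / q ^ 4) := by
    rw [hc]
    have h5 : q ^ 3 / (q * Y) ≤ 1 / q ^ 2 := by
      rw [div_le_div_iff₀ (by positivity) (by positivity)]; nlinarith
    have h6 : 1 ≤ K * (1 / q ^ 4) := by
      rw [mul_one_div, le_div_iff₀ (by positivity)]; linarith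
    nlinarith
  clear_value c K
  have hc0 : 0 < c := by
    have : 0 < 1 / q := by positivity
    nlinarith
  have hα0 : 0 < α := by linarith
  have hi2 : 1 / q ^ 2 + 1 / q ^ 4 ≤ 3 / q := by
    rw [← sub_nonneg]
    have : 3 / q - (1 / q ^ 2 + 1 / q ^ 4) = (3 * q ^ 3 - q ^ 2 - 1) / q ^ 4 := by
      field_simp
      ring
    rw [this]
    apply div_nonneg _ (by positivity)
    nlinarith [pow_pos hq0 2]
  have hcK : c ≤ K * (3 / q) := hc2.trans (mul_le_mul_of_nonneg_left hi2 hK0.le)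
  have hlow : c * ((1 + 3 / q) * K - c) ≤ α * ((1 + 3 / q) * K - α) := by
    have : 0 ≤ (α - c) * ((1 + 3 / q) * K - α - c) :=
      mul_nonneg (by linarith) (by linarith)
    linarith
  set d := 1 + 3 / q - 1 / q ^ 2 - 1 / q ^ 4 with hd
  have hd0 : 0 ≤ d := by rw [hd]; linarith
  have hlow2 : (q ^ 2 + q + 2 + 1 / q) * (K * d) ≤ c * ((1 + 3 / q) * K - c) := by
    apply mul_le_mul hc1 _ (by positivity) hc0.le
    rw [hd]; linarith
  have hzl : ((1 + 3 / q) * K - α) * G ≤ q * Y * b := by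
    rw [haα] at h4; linarith
  have hup : (q - 2) ^ 2 * (α * ((1 + 3 / q) * K - α)) ≤ (q - 1) ^ 3 * K * (q * Y / (Y - 1)) := by
    have e1 : (q - 2) ^ 2 * (α * ((1 + 3 / q) * K - α)) * G ^ 2
        = (q - 2) ^ 2 * a * (((1 + 3 / q) * K - α) * G) := by rw [haα]; ring
    have e2 : (q - 2) ^ 2 * a * (((1 + 3 / q) * K - α) * G) ≤ (q - 2) ^ 2 * a * (q * Y * b) :=
      mul_le_mul_of_nonneg_left hzl (by positivity)
    have e3 : (q - 2) ^ 2 * a * (q * Y * b) ≤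
        q * Y * ((q - 1) ^ 2 * (G * (G * ((q * Y - 1) / (Y - 1))))) := by
      have := mul_le_mul_of_nonneg_left h2 (by positivity : 0 ≤ q * Y)
      linarith
    have e4 : q * Y * ((q - 1) ^ 2 * (G * (G * ((q * Y - 1) / (Y - 1)))))
        = (q - 1) ^ 3 * K * (q * Y / (Y - 1)) * G ^ 2 := by
      rw [hKe]; ring
    have : (q - 2) ^ 2 * (α * ((1 + 3 / q) * K - α)) * G ^ 2
        ≤ (q - 1) ^ 3 * K * (q * Y / (Y - 1)) * G ^ 2 := by
      rw [e1, ← e4]; exact e2.trans e3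
    exact le_of_mul_le_mul_right this (by positivity)
  have hq4 : 0 < q ^ 4 - 1 := by
    have := pow_le_pow_left₀ (by norm_num) hq 4
    norm_num at this; linarith
  have hYd : q * Y / (Y - 1) ≤ q ^ 5 / (q ^ 4 - 1) := by
    rw [div_le_div_iff₀ (by linarith) hq4]
    nlinarith
  have hup2 : (q - 1) ^ 3 * K * (q * Y / (Y - 1)) ≤ (q - 1) ^ 3 * K * (q ^ 5 / (q ^ 4 - 1)) :=
    mul_le_mul_of_nonneg_left hYd (by positivity)
  have hall : (q - 2) ^ 2 * ((q ^ 2 + q + 2 + 1 / q) * (K * d))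
      ≤ (q - 1) ^ 3 * K * (q ^ 5 / (q ^ 4 - 1)) :=
    (mul_le_mul_of_nonneg_left (hlow2.trans hlow) (by positivity)).trans (hup.trans hup2)
  have hpoly := poly q hq
  have : (q - 2) ^ 2 * ((q ^ 2 + q + 2 + 1 / q) * d) ≤ (q - 1) ^ 3 * (q ^ 5 / (q ^ 4 - 1)) := by
    apply le_of_mul_le_mul_right _ hK0
    linarith
  rw [mul_div_assoc', le_div_iff₀ hq4] at this
  have e5 : (q - 2) ^ 2 * ((q ^ 2 + q + 2 + 1 / q) * d) * (q ^ 4 - 1)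
      = (q ^ 3 + q ^ 2 + 2 * q + 1) * (q ^ 4 + 3 * q ^ 3 - q ^ 2 - 1) * (q - 2) ^ 2 * (q ^ 4 - 1)
        / q ^ 5 := by
    rw [hd]; field_simp
  rw [e5, div_le_iff₀ (by positivity)] at this
  linarith
end
end BadPoint

open Module in
set_option maxHeartbeats 1000000 in
theorem bad_point_bound (q k : ℕ) (hq3 : 3 ≤ q) (hq : IsPrimePow q) (hk : 5 ≤ k)
    (F : Type) [Field F] [Fintype F] (hF : Fintype.card F = q)
    (Y : Set (Submodule F (Fin (2 * k) → F)))
    (hdim : ∀ R ∈ Y, Module.finrank F R = k)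
    (hint : ∀ R ∈ Y, ∀ S ∈ Y, R ⊓ S ≠ ⊥)
    (hsize : (Nat.card Y : ℚ) ≥ (1 + 3 / (q : ℚ)) * gaussBinom q k 1 * gaussBinom q (2 * k - 2) (k - 2))
    (hdict : ¬ ∃ p : Submodule F (Fin (2 * k) → F), Module.finrank F p = 1 ∧ ∀ R ∈ Y, p ≤ R)
    (hdual : ¬ ∃ H : Submodule F (Fin (2 * k) → F), Module.finrank F H = 2 * k - 1 ∧ ∀ R ∈ Y, R ≤ H) :
    ∀ p : Submodule F (Fin (2 * k) → F), Module.finrank F p = 1 →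
      (Nat.card {R : Submodule F (Fin (2 * k) → F) // R ∈ Y ∧ p ≤ R} : ℚ) ≤
        ((q : ℚ) ^ 3 / (q : ℚ) ^ k * gaussBinom q k 1 + 1) * gaussBinom q (2 * k - 2) (k - 2) := by
  classical
  intro p hp
  obtain ⟨j, rfl⟩ : ∃ j, k = j + 2 + 3 := ⟨k - 5, by omega⟩
  subst hF
  have : Fintype (Submodule F (Fin (2 * (j + 2 + 3)) → F)) := Fintype.ofFinite _
  have hn : finrank F (Fin (2 * (j + 2 + 3)) → F) = 2 * (j + 2 + 3) := by simp
  set A : Finset (Submodule F (Fin (2 * (j + 2 + 3)) → F)) :=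
    Finset.univ.filter fun R => R ∈ Y ∧ p ≤ R with hA
  set Z : Finset (Submodule F (Fin (2 * (j + 2 + 3)) → F)) :=
    Finset.univ.filter fun R => R ∈ Y ∧ ¬ p ≤ R with hZ
  have hAc : Nat.card {R : Submodule F (Fin (2 * (j + 2 + 3)) → F) // R ∈ Y ∧ p ≤ R} = A.card := by
    rw [Nat.card_eq_fintype_card, Fintype.card_subtype]
  have hYc : Nat.card Y = A.card + Z.card := by
    have h1 : Nat.card Y = (Finset.univ.filter fun R => R ∈ Y).card := by
      rw [← Fintype.card_subtype, ← Nat.card_eq_fintype_card]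
    rw [h1, hA, hZ, ← Finset.filter_filter, ← Finset.filter_filter,
      Finset.card_filter_add_card_filter_not]
  rw [hAc]
  rw [hYc] at hsize
  have hA1 : ∀ R ∈ A, p ≤ R ∧ finrank F R = j + 2 + 3 := by
    intro R hR
    simp only [hA, Finset.mem_filter, Finset.mem_univ, true_and] at hR
    exact ⟨hR.2, hdim R hR.1⟩
  have hAY : ∀ R ∈ A, R ∈ Y := fun R hR => (Finset.mem_filter.1 hR).2.1
  have hZY : ∀ T ∈ Z, T ∈ Y ∧ ¬ p ≤ T := fun R hR => (Finset.mem_filter.1 hR).2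
  have hTp : ∀ T ∈ Z, finrank F (T ⊔ p : Submodule F (Fin (2 * (j + 2 + 3)) → F)) = j + 2 + 3 + 1 := by
    intro T hT
    have h := Submodule.finrank_sup_add_finrank_inf_eq T p
    rw [BadPoint.point_disj p T hp (hZY T hT).2, finrank_bot, hp, hdim T (hZY T hT).1] at h
    exact h
  set B := Z.image (fun T => T ⊔ p) with hB
  have hB1 : ∀ R ∈ B, p ≤ R ∧ finrank F R = j + 2 + 1 + 3 := by
    intro R hR
    obtain ⟨T, hT, rfl⟩ := Finset.mem_image.1 hR
    exact ⟨le_sup_right, by rw [hTp T hT]⟩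
  have hZB : Z.card ≤ Fintype.card F ^ (j + 2 + 3) * B.card := by
    apply Finset.card_le_mul_card_image
    intro X hX
    obtain ⟨T, hT, rfl⟩ := Finset.mem_image.1 hX
    apply BadPoint.fiber p (T ⊔ p) hp (j + 2 + 3) (hTp T hT)
    intro S hS
    obtain ⟨hS1, hS2⟩ := Finset.mem_filter.1 hS
    exact ⟨hS2, hdim S (hZY S hS1).1⟩
  have hAB : ∀ R ∈ A, ∀ T ∈ B, ¬ (R ⊓ T ≤ p) := by
    intro R hR T hT hle
    obtain ⟨S, hS, rfl⟩ := Finset.mem_image.1 hT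
    apply hint R (hAY R hR) S (hZY S hS).1
    rw [eq_bot_iff, ← BadPoint.point_disj p S hp (hZY S hS).2]
    refine le_inf inf_le_right (le_trans (inf_le_inf_left R le_sup_left) hle)
  have hcross := BadPoint.cross p hp (j + 2) hn (by omega) A B hA1 hB1 hAB
  obtain ⟨T0, hT0, hpT0⟩ : ∃ T ∈ Y, ¬ p ≤ T := by
    by_contra hno
    push Not at hno
    exact hdict ⟨p, hp, hno⟩
  have hhm := BadPoint.hm p T0 hp (j + 2) (by omega) (hdim T0 hT0) hpT0 A hA1
    (fun R hR => hint R (hAY R hR) T0 hT0)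
  rw [hn] at hhm
  set q := Fintype.card F with hqd
  have hq3' : (3 : ℚ) ≤ q := by exact_mod_cast hq3
  have e1 : 2 * (j + 2 + 3) - 2 = (2 * j + 7) + 1 := by omega
  have e2 : j + 2 + 3 - 2 = j + 2 + 1 := by omega
  rw [e1] at hcross hhm
  rw [e1, e2, BadPoint.gb_one] at hsize ⊢
  have hp1 : ∀ n : ℕ, (0 : ℚ) < (q : ℚ) ^ (n + 1) - 1 := by
    intro n
    have := one_lt_pow₀ (by linarith : (1 : ℚ) < q) (Nat.succ_ne_zero n)
    simp only [Nat.succ_eq_add_one] at this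
    linarith
  have hG : 0 < gaussBinom q (2 * j + 7 + 1) (j + 2 + 1) := by
    unfold gaussBinom
    apply Finset.prod_pos
    intro i hi
    rw [Finset.mem_range] at hi
    have : 2 * j + 7 + 1 - i = (2 * j + 7 - i) + 1 := by omega
    rw [this]
    exact div_pos (hp1 _) (hp1 _)
  have hrB : gaussBinom q (2 * j + 7 + 1) (j + 2 + 1 + 1) = gaussBinom q (2 * j + 7 + 1) (j + 2 + 1) *
      (((q : ℚ) ^ 5 * (q : ℚ) ^ j - 1) / ((q : ℚ) ^ 4 * (q : ℚ) ^ j - 1)) := by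
    have : gaussBinom q (2 * j + 7 + 1) (j + 2 + 1 + 1) = gaussBinom q (2 * j + 7 + 1) (j + 2 + 1) *
        (((q : ℚ) ^ (2 * j + 7 + 1 - (j + 2 + 1)) - 1) / ((q : ℚ) ^ (j + 2 + 1 + 1) - 1)) := by
      unfold gaussBinom
      rw [Finset.prod_range_succ]
    rw [this, ← pow_add, ← pow_add, show 2 * j + 7 + 1 - (j + 2 + 1) = 5 + j by omega,
      show j + 2 + 1 + 1 = 4 + j by omega]
  have hpow : (q : ℚ) ^ (j + 2 + 3) = (q : ℚ) ^ 5 * (q : ℚ) ^ j := by rw [← pow_add]; congr 1; omega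
  rw [hrB] at hcross
  rw [hpow] at hhm hsize ⊢
  have hZB' : (Z.card : ℚ) ≤ (q : ℚ) ^ 5 * (q : ℚ) ^ j * B.card := by
    rw [← hpow]; exact_mod_cast hZB
  refine BadPoint.numeric q ((q : ℚ) ^ j) A.card Z.card B.card _ hq3' (one_le_pow₀ (by linarith)) hG
    (by positivity) hhm hcross hZB' ?_
  push_cast at hsize
  exact hsize
end

section
/- Let q ≥ 3, k ≥ 5 (or q ≥ 5, k ≥ 6), and let Y be an intersecting family of k-dimensional subspaces of F_q^{2k} with |Y| ≥ (1 + 3q^{−1})·[k choose 1]_q·[2k−2 choose k−2]_q. Let s be the minimum dimension of a subspace of F_q^{2k} meeting every member of Y nontrivially. Then s = 1 or s = k. -/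
open Module
set_option linter.unusedSectionVars false

section count
variable {F V : Type*} [Field F] [Fintype F] [AddCommGroup V] [Module F V] [Finite V]


/-- fibres of surjective linear maps -/
theorem card_preimage_linear {X Z : Type*} [AddCommGroup X] [Module F X] [AddCommGroup Z]
    [Module F Z] [Finite X] (L : X →ₗ[F] Z) (hL : Function.Surjective L) (T : Z → Prop) :
    Nat.card {x : X // T (L x)} * Fintype.card F ^ finrank F Z
      = Nat.card {z : Z // T z} * Fintype.card F ^ finrank F X := by
  obtain ⟨s, hs⟩ := L.exists_rightInverse_of_surjective (LinearMap.range_eq_top.2 hL)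
  have hs' : ∀ z, L (s z) = z := fun z => LinearMap.congr_fun hs z
  have : Finite Z := Finite.of_surjective L hL
  have e : {x : X // T (L x)} ≃ {z : Z // T z} × LinearMap.ker L :=
    { toFun := fun x => (⟨L x.1, x.2⟩, ⟨x.1 - s (L x.1), by simp [hs']⟩)
      invFun := fun y => ⟨s y.1.1 + y.2.1, by
        have := y.2.2
        rw [LinearMap.mem_ker] at this
        simpa [hs', this] using y.1.2⟩
      left_inv := fun x => by simp
      right_inv := fun y => by
        have := y.2.2
        rw [LinearMap.mem_ker] at this
        ext <;> simp [hs', this] }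
  rw [Nat.card_congr e, Nat.card_prod, Module.natCard_eq_pow_finrank (K := F) (V := LinearMap.ker L)]
  have := L.finrank_range_add_finrank_ker
  rw [LinearMap.range_eq_top.2 hL, finrank_top] at this
  rw [← this, pow_add, Nat.card_eq_fintype_card (α := F)]
  ring

/-- number of k-subspaces -/
theorem card_subspaces_mul (k : ℕ) (hk : k ≤ finrank F V) :
    Nat.card {W : Submodule F V // finrank F W = k} *
      ∏ i : Fin k, (Fintype.card F ^ k - Fintype.card F ^ i.val)
    = ∏ i : Fin k, (Fintype.card F ^ finrank F V - Fintype.card F ^ i.val) := by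
  classical
  rw [← card_linearIndependent (K := F) (V := V) hk]
  have hsp : ∀ (W : Submodule F V) (_ : finrank F W = k) (s : Fin k → W)
      (_ : LinearIndependent F s), Submodule.span F (Set.range fun i => (s i : V)) = W := by
    intro W hW s hs
    apply Submodule.eq_of_le_of_finrank_eq
    · rw [Submodule.span_le]; rintro _ ⟨i, rfl⟩; exact (s i).2
    · rw [hW]
      have := hs.map' (Submodule.subtype _) (Submodule.ker_subtype W)
      have h2 := finrank_span_eq_card this
      rw [Fintype.card_fin] at h2
      exact h2
  let g : (Σ W : {W : Submodule F V // finrank F W = k},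
      {s : Fin k → W.1 // LinearIndependent F s}) → {s : Fin k → V // LinearIndependent F s} :=
    fun t => ⟨fun i => (t.2.1 i : V), by
          exact t.2.2.map' (Submodule.subtype _) (Submodule.ker_subtype _)⟩
  have hg : Function.Bijective g := by
    constructor
    · rintro ⟨⟨W, hW⟩, ⟨s, hs⟩⟩ ⟨⟨W', hW'⟩, ⟨s', hs'⟩⟩ h
      have h1 : (fun i => (s i : V)) = fun i => (s' i : V) := congrArg Subtype.val h
      have hWW : W = W' := by rw [← hsp W hW s hs, ← hsp W' hW' s' hs', h1]
      subst hWW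
      have : s = s' := by
        funext i
        exact Subtype.ext (congrFun h1 i)
      subst this
      rfl
    · intro s
      refine ⟨⟨⟨Submodule.span F (Set.range s.1), by
          simpa using finrank_span_eq_card s.2⟩,
          ⟨fun i => ⟨s.1 i, Submodule.subset_span ⟨i, rfl⟩⟩, by
            exact LinearIndependent.of_comp (Submodule.subtype _) s.2⟩⟩, rfl⟩
  have e := (Equiv.ofBijective g hg).symm
  rw [Nat.card_congr e]
  have := Fintype.ofFinite {W : Submodule F V // finrank F W = k}
  rw [Nat.card_sigma]
  have : ∀ W : {W : Submodule F V // finrank F W = k},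
      Nat.card {s : Fin k → W.1 // LinearIndependent F s} =
      ∏ i : Fin k, (Fintype.card F ^ k - Fintype.card F ^ i.val) := by
    intro W
    rw [card_linearIndependent (K := F) (V := W.1) (le_of_eq W.2.symm), W.2]
  rw [Finset.sum_congr rfl (fun W _ => this W)]
  simp

theorem card_subspaces_ge (W : Submodule F V) (k : ℕ) (hk : finrank F W ≤ k) :
    Nat.card {R : Submodule F V // finrank F R = k ∧ W ≤ R}
     = Nat.card {R : Submodule F (V ⧸ W) // finrank F R = k - finrank F W} := by
  have key : ∀ R : Submodule F V, W ≤ R → finrank F (R.map W.mkQ) + finrank F W = finrank F R := by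
    intro R hR
    have h1 := LinearMap.finrank_range_add_finrank_ker (W.mkQ.domRestrict R)
    rw [LinearMap.range_domRestrict] at h1
    rw [← h1]
    congr 1
    rw [LinearMap.ker_domRestrict, Submodule.ker_mkQ]
    exact (Submodule.comapSubtypeEquivOfLe hR).finrank_eq.symm
  refine Nat.card_congr
    { toFun := fun R => ⟨R.1.map W.mkQ, by have := key R.1 R.2.2; have := R.2.1; omega⟩
      invFun := fun R => ⟨R.1.comap W.mkQ, by
        have h := key (R.1.comap W.mkQ) (by simpa using Submodule.comap_mono (f := W.mkQ) (bot_le (a := R.1)))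
        rw [Submodule.map_comap_eq_of_surjective W.mkQ_surjective] at h
        have := R.2
        refine ⟨by omega, by simpa using Submodule.comap_mono (f := W.mkQ) (bot_le (a := R.1))⟩⟩
      left_inv := fun R => by
        ext1; simp [Submodule.comap_map_eq, R.2.2]
      right_inv := fun R => by
        ext1; simp [Submodule.map_comap_eq_of_surjective W.mkQ_surjective] }
end count


section gauss
theorem gb_eq (q n k : ℕ) (hq : 2 ≤ q) (hk : k ≤ n) :
    gaussBinom q n k * ∏ i ∈ Finset.range k, ((q : ℚ) ^ k - (q : ℚ) ^ i)
      = ∏ i ∈ Finset.range k, ((q : ℚ) ^ n - (q : ℚ) ^ i) := by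
  have hq1 : (1 : ℚ) < q := by exact_mod_cast hq
  have h1 : ∀ n, k ≤ n → ∏ i ∈ Finset.range k, ((q : ℚ) ^ n - (q : ℚ) ^ i) =
      (∏ i ∈ Finset.range k, (q : ℚ) ^ i) * ∏ i ∈ Finset.range k, ((q : ℚ) ^ (n - i) - 1) := by
    intro n hn
    rw [← Finset.prod_mul_distrib]
    refine Finset.prod_congr rfl fun i hi => ?_
    have : i < k := Finset.mem_range.1 hi
    rw [mul_sub, mul_one, ← pow_add, Nat.add_sub_cancel' (by omega)]
  rw [h1 n hk, h1 k le_rfl, gaussBinom, Finset.prod_div_distrib]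
  have h2 : ∏ i ∈ Finset.range k, ((q : ℚ) ^ (k - i) - 1) =
      ∏ i ∈ Finset.range k, ((q : ℚ) ^ (i + 1) - 1) := by
    rw [← Finset.prod_range_reflect]
    refine Finset.prod_congr rfl fun i hi => ?_
    have : i < k := Finset.mem_range.1 hi
    congr 2; omega
  rw [h2]
  have h3 : ∏ i ∈ Finset.range k, ((q : ℚ) ^ (i + 1) - 1) ≠ 0 := by
    refine Finset.prod_ne_zero_iff.2 fun i _ => ?_
    have := one_lt_pow₀ hq1 (n := i + 1) (by omega)
    linarith
  field_simp

theorem gb_pos (q n k : ℕ) (hq : 2 ≤ q) (hk : k ≤ n) : 0 < gaussBinom q n k := by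
  have hq1 : (1 : ℚ) < q := by exact_mod_cast hq
  refine Finset.prod_pos fun i hi => ?_
  have : i < k := Finset.mem_range.1 hi
  have h1 := one_lt_pow₀ hq1 (n := i + 1) (by omega)
  have h2 := one_lt_pow₀ hq1 (n := n - i) (by omega)
  exact div_pos (by linarith) (by linarith)

theorem gb_one (q n : ℕ) : gaussBinom q n 1 = ((q : ℚ) ^ n - 1) / (q - 1) := by
  simp [gaussBinom]

theorem gb_succ (q n k : ℕ) (hq : 2 ≤ q) :
    gaussBinom q n (k + 1) * ((q : ℚ) ^ (k + 1) - 1) = gaussBinom q n k * ((q : ℚ) ^ (n - k) - 1) := by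
  have hq1 : (1 : ℚ) < q := by exact_mod_cast hq
  have h1 := one_lt_pow₀ hq1 (n := k + 1) (by omega)
  have h2 : (q : ℚ) ^ (k + 1) - 1 ≠ 0 := by linarith
  rw [gaussBinom, Finset.prod_range_succ, gaussBinom]
  field_simp

theorem gb_succ_succ (q n k : ℕ) (hq : 2 ≤ q) :
    gaussBinom q (n + 1) (k + 1) * ((q : ℚ) ^ (k + 1) - 1)
      = gaussBinom q n k * ((q : ℚ) ^ (n + 1) - 1) := by
  have hq1 : (1 : ℚ) < q := by exact_mod_cast hq
  have h1 := one_lt_pow₀ hq1 (n := k + 1) (by omega)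
  have h2 : (q : ℚ) ^ (k + 1) - 1 ≠ 0 := by linarith
  rw [gaussBinom, gaussBinom, Finset.prod_div_distrib, Finset.prod_div_distrib,
    Finset.prod_range_succ', Finset.prod_range_succ (fun i => (q : ℚ) ^ (i + 1) - 1)]
  simp only [Nat.add_sub_add_right, Nat.sub_zero]
  have h3 : ∏ i ∈ Finset.range k, ((q : ℚ) ^ (i + 1) - 1) ≠ 0 := by
    refine Finset.prod_ne_zero_iff.2 fun i _ => ?_
    have := one_lt_pow₀ hq1 (n := i + 1) (by omega)
    linarith
  field_simp

variable {F V : Type*} [Field F] [Fintype F] [AddCommGroup V] [Module F V] [Finite V]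

theorem two_le_card : 2 ≤ Fintype.card F := Fintype.one_lt_card

theorem cast_prod_sub (q n k : ℕ) (hq : 2 ≤ q) (hk : k ≤ n) :
    ((∏ i : Fin k, (q ^ n - q ^ i.val) : ℕ) : ℚ) =
      ∏ i ∈ Finset.range k, ((q : ℚ) ^ n - (q : ℚ) ^ i) := by
  rw [Finset.prod_range, Nat.cast_prod]
  refine Finset.prod_congr rfl fun i _ => ?_
  rw [Nat.cast_sub (Nat.pow_le_pow_right (by omega) (by omega))]
  push_cast; rfl

theorem card_subspaces (k : ℕ) (hk : k ≤ finrank F V) :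
    (Nat.card {W : Submodule F V // finrank F W = k} : ℚ) =
      gaussBinom (Fintype.card F) (finrank F V) k := by
  have hq := two_le_card (F := F)
  have hq1 : (1 : ℚ) < Fintype.card F := by exact_mod_cast hq
  have h := congrArg (Nat.cast : ℕ → ℚ) (card_subspaces_mul (F := F) (V := V) k hk)
  rw [Nat.cast_mul, cast_prod_sub _ _ _ hq le_rfl, cast_prod_sub _ _ _ hq hk,
    ← gb_eq _ _ _ hq hk] at h
  refine mul_right_cancel₀ ?_ h
  refine Finset.prod_ne_zero_iff.2 fun i hi => ?_
  have := pow_lt_pow_right₀ hq1 (Finset.mem_range.1 hi)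
  linarith

theorem card_subspaces_ge' (W : Submodule F V) (k : ℕ) (hk : finrank F W ≤ k)
    (hk2 : k ≤ finrank F V) :
    (Nat.card {R : Submodule F V // finrank F R = k ∧ W ≤ R} : ℚ)
     = gaussBinom (Fintype.card F) (finrank F V - finrank F W) (k - finrank F W) := by
  have : Finite (V ⧸ W) := Quotient.finite _
  have h := W.finrank_quotient_add_finrank
  rw [card_subspaces_ge W k hk, card_subspaces _ (by omega)]
  congr 1; omega

end gauss


section compl
variable {F V : Type*} [Field F] [Fintype F] [AddCommGroup V] [Module F V] [Finite V]

theorem exists_pair_extend {W : Type*} [AddCommGroup W] [Module F W] (A D : Submodule F V)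
    (h : Disjoint A D) (a : A →ₗ[F] W) (b : D →ₗ[F] W) :
    ∃ f : V →ₗ[F] W, f ∘ₗ A.subtype = a ∧ f ∘ₗ D.subtype = b := by
  obtain ⟨A', hA, hc⟩ := h.exists_isCompl
  obtain ⟨g, hg⟩ := LinearMap.exists_extend a
  refine ⟨LinearMap.ofIsCompl hc (g ∘ₗ A'.subtype) b, ?_, ?_⟩
  · ext x
    have h1 := LinearMap.ofIsCompl_apply_left hc (φ := g ∘ₗ A'.subtype) (ψ := b) ⟨x, hA x.2⟩
    have h2 := LinearMap.congr_fun hg x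
    simp only [LinearMap.comp_apply, Submodule.subtype_apply] at h1 h2 ⊢
    rw [h1, h2]
  · ext x; simp

theorem card_common_compl (m : ℕ) (A A' : Submodule F V) (hV : finrank F V = 2 * m)
    (hA : finrank F A = m) (hA' : finrank F A' = m) (r : ℕ)
    (hr : r + finrank F (A ⊓ A' : Submodule F V) = m) :
    Nat.card {B : Submodule F V // IsCompl A B ∧ IsCompl A' B} * Fintype.card F ^ (r * r)
      = (∏ i : Fin r, (Fintype.card F ^ r - Fintype.card F ^ i.val)) * Fintype.card F ^ (m * m) := by
  classical
  set q := Fintype.card F with hq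
  obtain ⟨E, hE⟩ := exists_isCompl (A ⊓ A')
  set D := E ⊓ A' with hD
  have hDI : D ⊔ (A ⊓ A') = A' := by
    rw [sup_comm, hD, ← sup_inf_assoc_of_le _ (inf_le_right : A ⊓ A' ≤ A'), hE.sup_eq_top, top_inf_eq]
  have hdisj : Disjoint A D := by
    rw [disjoint_iff, hD, ← hE.inf_eq_bot]
    ac_rfl
  have hDr : finrank F D = r := by
    have h1 := Submodule.finrank_sup_add_finrank_inf_eq D (A ⊓ A')
    have h2 : D ⊓ (A ⊓ A') = ⊥ := by
      rw [← le_bot_iff, ← hdisj.eq_bot]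
      exact le_inf (inf_le_right.trans inf_le_left) inf_le_left
    rw [h2, hDI, finrank_bot] at h1
    omega
  set I : Submodule F A := A'.comap A.subtype with hI
  have hIr : finrank F I = finrank F (A ⊓ A' : Submodule F V) := by
    rw [← Submodule.map_comap_subtype A A']
    exact (Submodule.finrank_map_subtype_eq _ _).symm
  have hQr : finrank F (A ⧸ I) = r := by
    have := I.finrank_quotient_add_finrank
    omega
  have : Finite (V →ₗ[F] A) := DFunLike.finite _
  have : Finite (A →ₗ[F] A) := DFunLike.finite _
  have : Finite (A ⧸ I) := Quotient.finite _
  have : Finite (D →ₗ[F] (A ⧸ I)) := DFunLike.finite _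
  -- step 1
  have step1 : Nat.card {B : Submodule F V // IsCompl A B ∧ IsCompl A' B} =
      Nat.card {f : V →ₗ[F] A // (∀ x : A, f x = x) ∧ ∀ x ∈ A', f x = 0 → x = 0} := by
    have e1 := Equiv.subtypeEquiv (p := fun B => IsCompl A' B.1)
      (q := fun f => ∀ x ∈ A', f.1 x = 0 → x = 0) A.isComplEquivProj (by
        rintro ⟨B, hB⟩
        have hk : LinearMap.ker (A.isComplEquivProj ⟨B, hB⟩).1 = B := by
          have := A.isComplEquivProj.symm_apply_apply ⟨B, hB⟩
          exact congrArg Subtype.val this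
        have hBm : finrank F B = m := by
          have := Submodule.finrank_add_eq_of_isCompl hB
          omega
        constructor
        · intro h x hx h0
          have : x ∈ B := by rw [← hk]; exact h0
          have : x ∈ A' ⊓ B := ⟨hx, this⟩
          rw [h.inf_eq_bot] at this
          simpa using this
        · intro h
          have hdis : A' ⊓ B = ⊥ := by
            rw [Submodule.eq_bot_iff]
            rintro x ⟨hx, hxB⟩
            refine h x hx ?_
            rw [SetLike.mem_coe, ← hk] at hxB
            exact hxB
          refine IsCompl.of_eq hdis ?_
          apply Submodule.eq_top_of_finrank_eq
          have := Submodule.finrank_sup_add_finrank_inf_eq A' B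
          change finrank F (A' ⊔ B : Submodule F V) = _
          rw [hdis, finrank_bot] at this
          omega)
    refine Nat.card_congr ?_
    exact ((Equiv.subtypeSubtypeEquivSubtypeInter _ _).symm.trans e1).trans
      (Equiv.subtypeSubtypeEquivSubtypeInter (fun f : V →ₗ[F] A => ∀ x : A, f x = x)
        (fun f => ∀ x ∈ A', f x = 0 → x = 0))
  let L : (V →ₗ[F] A) →ₗ[F] (A →ₗ[F] A) × (D →ₗ[F] (A ⧸ I)) :=
    LinearMap.prod (LinearMap.lcomp F A A.subtype)
      ((LinearMap.llcomp F D A (A ⧸ I) I.mkQ) ∘ₗ (LinearMap.lcomp F A D.subtype))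
  have hL : Function.Surjective L := by
    rintro ⟨a, b⟩
    obtain ⟨s, hs⟩ := I.mkQ.exists_rightInverse_of_surjective I.range_mkQ
    obtain ⟨f, hf1, hf2⟩ := exists_pair_extend A D hdisj a (s ∘ₗ b)
    refine ⟨f, Prod.ext hf1 ?_⟩
    change I.mkQ ∘ₗ (f ∘ₗ D.subtype) = b
    rw [hf2, ← LinearMap.comp_assoc, hs, LinearMap.id_comp]
  have step2 := card_preimage_linear L hL
    (fun z => z.1 = LinearMap.id ∧ Function.Injective z.2)
  have step3 : Nat.card {f : V →ₗ[F] A // (∀ x : A, f x = x) ∧ ∀ x ∈ A', f x = 0 → x = 0} =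
      Nat.card {f : V →ₗ[F] A // (L f).1 = LinearMap.id ∧ Function.Injective (L f).2} := by
    refine Nat.card_congr (Equiv.subtypeEquivRight fun f => ?_)
    have h1 : (L f).1 = LinearMap.id ↔ ∀ x : A, f x = x := by
      constructor
      · intro h x; exact LinearMap.congr_fun h x
      · intro h; ext x; exact congrArg _ (h x)
    rw [h1]
    refine and_congr_right fun hf => ?_
    have h2 : ∀ d : D, (L f).2 d = I.mkQ (f d) := fun d => rfl
    rw [← LinearMap.ker_eq_bot, LinearMap.ker_eq_bot']
    constructor
    · intro h d hd
      rw [h2, Submodule.mkQ_apply, Submodule.Quotient.mk_eq_zero] at hd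
      have hd' : ((f d : A) : V) ∈ A' := hd
      have hdA' : (d : V) ∈ A' := d.2.2
      have h3 : (d : V) - (f d : A) = 0 := by
        refine h _ (A'.sub_mem hdA' hd') ?_
        rw [map_sub, hf (f d), sub_self]
      have h4 : (d : V) ∈ A ⊓ D := ⟨by rw [sub_eq_zero.1 h3]; exact (f d).2, d.2⟩
      rw [hdisj.eq_bot] at h4
      exact Subtype.ext (by simpa using h4)
    · intro h x hx h0
      rw [← hDI] at hx
      obtain ⟨d, hd, i, hi, rfl⟩ := Submodule.mem_sup.1 hx
      have hfi : f i = ⟨i, hi.1⟩ := hf ⟨i, hi.1⟩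
      rw [map_add, hfi] at h0
      have hd0 : (⟨d, hd⟩ : D) = 0 := by
        apply h
        rw [h2, Submodule.mkQ_apply, Submodule.Quotient.mk_eq_zero]
        have : f d = -⟨i, hi.1⟩ := eq_neg_of_add_eq_zero_left h0
        change f d ∈ I
        rw [this]
        exact I.neg_mem hi.2
      have hd0' : d = 0 := congrArg Subtype.val hd0
      subst hd0'
      simp only [map_zero, zero_add] at h0 ⊢
      exact congrArg Subtype.val h0
  have step4 : Nat.card {z : (A →ₗ[F] A) × (D →ₗ[F] (A ⧸ I)) //
      z.1 = LinearMap.id ∧ Function.Injective z.2} =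
      ∏ i : Fin r, (q ^ r - q ^ i.val) := by
    rw [← hQr, hq, ← card_linearIndependent (K := F) (V := A ⧸ I) le_rfl, hQr]
    let b := Module.finBasisOfFinrankEq F D hDr
    have e : {z : (A →ₗ[F] A) × (D →ₗ[F] (A ⧸ I)) //
      z.1 = LinearMap.id ∧ Function.Injective z.2} ≃ {f : D →ₗ[F] (A ⧸ I) // Function.Injective f} :=
      { toFun := fun z => ⟨z.1.2, z.2.2⟩
        invFun := fun f => ⟨(LinearMap.id, f.1), rfl, f.2⟩
        left_inv := fun z => by
          obtain ⟨⟨a, b⟩, h1, h2⟩ := z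
          simp only at h1
          subst h1; rfl
        right_inv := fun f => rfl }
    rw [Nat.card_congr e]
    refine Nat.card_congr (Equiv.subtypeEquiv (b.constr F).symm.toEquiv fun f => ?_)
    have : (b.constr F).symm.toEquiv f = f ∘ b := by
      ext i; simp [Basis.constr]
    rw [this, ← LinearMap.ker_eq_bot]
    constructor
    · intro h; exact b.linearIndependent.map' f h
    · intro h
      rw [LinearMap.ker_eq_bot']
      intro x hx
      rw [Fintype.linearIndependent_iff] at h
      have h0 := h (fun i => b.repr x i) (by
        rw [← hx]
        conv_rhs => rw [← b.sum_repr x, map_sum]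
        simp)
      rw [← b.sum_repr x]
      simp [h0]
  have d1 : finrank F (V →ₗ[F] A) = 2 * m * m := by
    rw [Module.finrank_linearMap, hV, hA]
  have d2 : finrank F ((A →ₗ[F] A) × (D →ₗ[F] (A ⧸ I))) = m * m + r * r := by
    rw [Module.finrank_prod, Module.finrank_linearMap, Module.finrank_linearMap, hA, hDr, hQr]
  rw [← step3, ← step1, step4, d1, d2, pow_add] at step2
  have hq0 : 0 < q ^ (m * m) := pow_pos Fintype.card_pos _
  apply Nat.eq_of_mul_eq_mul_right hq0
  rw [show 2 * m * m = m * m + m * m by ring, pow_add, ← hq] at step2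
  linarith

theorem card_compl_pt (m : ℕ) (A P : Submodule F V) (hV : finrank F V = 2 * m)
    (hA : finrank F A = m) (hP : finrank F P = 1) (h : Disjoint A P) :
    Nat.card {B : Submodule F V // IsCompl A B ∧ P ≤ B} * Fintype.card F ^ m
      =  Fintype.card F ^ (m * m) := by
  set q := Fintype.card F with hq
  have : Finite (V →ₗ[F] A) := DFunLike.finite _
  have step1 : Nat.card {B : Submodule F V // IsCompl A B ∧ P ≤ B} =
      Nat.card {f : V →ₗ[F] A // (∀ x : A, f x = x) ∧ ∀ x ∈ P, f x = 0} := by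
    have e1 := Equiv.subtypeEquiv (p := fun B => P ≤ B.1)
      (q := fun f => ∀ x ∈ P, f.1 x = 0) A.isComplEquivProj (by
        rintro ⟨B, hB⟩
        have hk : LinearMap.ker (A.isComplEquivProj ⟨B, hB⟩).1 = B := by
          have := A.isComplEquivProj.symm_apply_apply ⟨B, hB⟩
          exact congrArg Subtype.val this
        constructor
        · intro h x hx
          have : x ∈ B := h hx
          rw [← hk] at this
          exact this
        · intro h x hx
          have := h x hx
          rw [← LinearMap.mem_ker, hk] at this
          exact this)
    refine Nat.card_congr ?_
    exact ((Equiv.subtypeSubtypeEquivSubtypeInter _ _).symm.trans e1).trans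
      (Equiv.subtypeSubtypeEquivSubtypeInter (fun f : V →ₗ[F] A => ∀ x : A, f x = x)
        (fun f => ∀ x ∈ P, f x = 0))
  let L : (V →ₗ[F] A) →ₗ[F] (A →ₗ[F] A) × (P →ₗ[F] A) :=
    LinearMap.prod (LinearMap.lcomp F A A.subtype) (LinearMap.lcomp F A P.subtype)
  have hL : Function.Surjective L := by
    rintro ⟨a, b⟩
    obtain ⟨f, hf1, hf2⟩ := exists_pair_extend A P h a b
    exact ⟨f, Prod.ext hf1 hf2⟩
  have step2 := card_preimage_linear L hL (fun z => z = (LinearMap.id, 0))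
  have step3 : Nat.card {f : V →ₗ[F] A // (∀ x : A, f x = x) ∧ ∀ x ∈ P, f x = 0} =
      Nat.card {f : V →ₗ[F] A // L f = (LinearMap.id, 0)} := by
    refine Nat.card_congr (Equiv.subtypeEquivRight fun f => ?_)
    rw [Prod.ext_iff]
    refine and_congr ?_ ?_
    · constructor
      · intro h; ext x; exact congrArg _ (h x)
      · intro h x; exact LinearMap.congr_fun h x
    · constructor
      · intro h; ext x; exact congrArg _ (h x x.2)
      · intro h x hx; exact LinearMap.congr_fun h ⟨x, hx⟩
  have d1 : finrank F (V →ₗ[F] A) = 2 * m * m := by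
    rw [Module.finrank_linearMap, hV, hA]
  have d2 : finrank F ((A →ₗ[F] A) × (P →ₗ[F] A)) = m * m + m := by
    rw [Module.finrank_prod, Module.finrank_linearMap, Module.finrank_linearMap, hA, hP, one_mul]
  rw [← step3, ← step1, d1, d2, pow_add] at step2
  have hq0 : 0 < q ^ (m * m) := pow_pos Fintype.card_pos _
  apply Nat.eq_of_mul_eq_mul_right hq0
  rw [show 2 * m * m = m * m + m * m by ring, pow_add, ← hq] at step2
  simp only [Nat.card_unique, one_mul] at step2
  linarith
end compl


section spectral

theorem hilb_bound {E : Type*} [NormedAddCommGroup E] [InnerProductSpace ℝ E]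
    [FiniteDimensional ℝ E] (T : E →ₗ[ℝ] E) (hT : ∀ x y, inner ℝ (T x) y = inner ℝ x (T y))
    (one : E) (hone : one ≠ 0) (d lam : ℝ) (h1 : T one = d • one) (G : Set E)
    (hG : ∀ g ∈ G, ∃ c : ℝ, T g = c • one - lam • g)
    (hw : ∀ w, inner ℝ one w = 0 → (∀ g ∈ G, inner ℝ g w = 0) → ‖T w‖ ^ 2 ≤ lam ^ 2 * ‖w‖ ^ 2)
    (x : E) (hx : inner ℝ one x = 0) : ‖T x‖ ^ 2 ≤ lam ^ 2 * ‖x‖ ^ 2 := by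
  let U : Submodule ℝ E := Submodule.span ℝ (insert one G)
  have hone_mem : one ∈ U := Submodule.subset_span (Set.mem_insert _ _)
  have hU : ∀ u ∈ U, ∃ c : ℝ, T u = c • one - lam • u := by
    intro u hu
    induction hu using Submodule.span_induction with
    | mem u hu =>
      rcases hu with rfl | hu
      · exact ⟨d + lam, by rw [h1]; module⟩
      · exact hG u hu
    | zero => exact ⟨0, by simp⟩
    | add a b _ _ ha hb =>
      obtain ⟨c, hc⟩ := ha
      obtain ⟨c', hc'⟩ := hb
      exact ⟨c + c', by rw [map_add, hc, hc']; module⟩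
    | smul t a _ ha =>
      obtain ⟨c, hc⟩ := ha
      exact ⟨t * c, by rw [map_smul, hc]; module⟩
  obtain ⟨u, hu, w, hwU, rfl⟩ := U.exists_add_mem_mem_orthogonal x
  have hw' := hwU
  rw [Submodule.mem_orthogonal] at hw'
  have how : inner ℝ one w = 0 := hw' _ hone_mem
  have hou : inner ℝ one u = 0 := by rw [inner_add_right, how, add_zero] at hx; exact hx
  obtain ⟨c, hc⟩ := hU u hu
  have hc0 : c = 0 := by
    have h2 : inner ℝ one (T u) = 0 := by
      rw [← hT, h1, inner_smul_left, hou, mul_zero]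
    rw [hc, inner_sub_right, inner_smul_right, inner_smul_right, hou, mul_zero, sub_zero] at h2
    rcases mul_eq_zero.1 h2 with h | h
    · exact h
    · exact absurd (inner_self_eq_zero.1 h) hone
  have hTu : T u = -(lam • u) := by rw [hc, hc0]; simp
  have hTw : inner ℝ u (T w) = 0 := by
    rw [← hT, hTu, inner_neg_left, inner_smul_left, hw' _ hu]; simp
  have hb := hw w how (fun g hg => hw' _ (Submodule.subset_span (Set.mem_insert_of_mem _ hg)))
  have e1 : ‖T (u + w)‖ ^ 2 = lam ^ 2 * ‖u‖ ^ 2 + ‖T w‖ ^ 2 := by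
    rw [map_add, @norm_add_sq_real, hTu, inner_neg_left, inner_smul_left, hTw, norm_neg, norm_smul,
      mul_pow]
    simp
  have e2 : ‖u + w‖ ^ 2 = ‖u‖ ^ 2 + ‖w‖ ^ 2 := by
    rw [@norm_add_sq_real, hw' _ hu]; ring
  rw [e1, e2]; linarith

theorem kernel_bound {X Pt : Type*} [Fintype X] [Fintype Pt] [Nonempty X]
    (k : X → X → ℝ) (inc : Pt → X → ℝ) (lam d e0 e1 : ℝ)
    (hk : ∀ A B, k A B = k B A)
    (h1 : ∀ P A, ∑ B, k A B * inc P B = lam * (1 - inc P A))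
    (h2 : ∀ A, ∑ B, k A B = d)
    (h3 : ∀ A A', e0 + e1 * ∑ P, inc P A * inc P A' ≤ ∑ B, k A B * k A' B)
    (h4 : ∀ A, ∑ A', (∑ B, k A B * k A' B - e0 - e1 * ∑ P, inc P A * inc P A') ≤ lam ^ 2)
    (x : X → ℝ) (hx : ∑ A, x A = 0) :
    ∑ A, (∑ B, k A B * x B) ^ 2 ≤ lam ^ 2 * ∑ A, x A ^ 2 := by
  classical
  let T : EuclideanSpace ℝ X →ₗ[ℝ] EuclideanSpace ℝ X :=
    { toFun := fun x => WithLp.toLp 2 (fun A => ∑ B, k A B * x B)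
      map_add' := fun x y => by
        ext A; simp [mul_add, Finset.sum_add_distrib]
      map_smul' := fun c x => by
        ext A; simp [Finset.mul_sum]; congr; ext; ring }
  have hTa : ∀ x A, T x A = ∑ B, k A B * x B := fun x A => rfl
  have hn : ∀ x : EuclideanSpace ℝ X, ‖x‖ ^ 2 = ∑ A, x A ^ 2 := fun x => by
    rw [EuclideanSpace.norm_sq_eq]; simp
  have hin : ∀ x y : EuclideanSpace ℝ X, inner ℝ x y = ∑ A, x A * y A := fun x y => by
    rw [PiLp.inner_apply]; simp [mul_comm]
  let one : EuclideanSpace ℝ X := WithLp.toLp 2 (fun _ => 1)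
  let pen : Pt → EuclideanSpace ℝ X := fun P => WithLp.toLp 2 (inc P)
  have key := hilb_bound T (fun x y => by
      simp only [hin, hTa, Finset.sum_mul, Finset.mul_sum]
      rw [Finset.sum_comm]
      refine Finset.sum_congr rfl fun A _ => Finset.sum_congr rfl fun B _ => ?_
      rw [hk B A]; ring) one (by
        intro h
        have := congrArg (fun z : EuclideanSpace ℝ X => z (Classical.arbitrary X)) h
        simp [one] at this) d lam (by
        ext A
        simp [hTa, one, h2]) (Set.range pen) (by
        rintro _ ⟨P, rfl⟩
        refine ⟨lam, ?_⟩
        ext A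
        simp [hTa, one, pen, h1, mul_sub]) (by
        intro w ho hg
        have hsum : ∑ A, w A = 0 := by simpa [hin, one] using ho
        have hpen : ∀ P, ∑ A, inc P A * w A = 0 := fun P => by
          simpa [hin, pen] using hg _ ⟨P, rfl⟩
        rw [hn, hn]
        simp only [hTa]
        set g : X → X → ℝ := fun A A' => ∑ B, k A B * k A' B - e0 - e1 * ∑ P, inc P A * inc P A'
          with hgdef
        have hg0 : ∀ A A', 0 ≤ g A A' := fun A A' => by have := h3 A A'; simp only [hgdef]; linarith
        have hgs : ∀ A A', g A A' = g A' A := fun A A' => by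
          simp only [hgdef]
          simp only [mul_comm (k A _), mul_comm (inc _ A)]
        have a1 : ∑ A, (∑ B, k A B * w B) ^ 2 = ∑ B, ∑ B', (∑ A, k B A * k B' A) * (w B * w B') := by
          have : ∀ A, (∑ B, k A B * w B) ^ 2 = ∑ B, ∑ B', k B A * k B' A * (w B * w B') := by
            intro A
            rw [sq, Finset.sum_mul_sum]
            refine Finset.sum_congr rfl fun B _ => Finset.sum_congr rfl fun B' _ => ?_
            rw [hk A B, hk A B']; ring
          simp only [this, Finset.sum_mul]
          rw [Finset.sum_comm]
          exact Finset.sum_congr rfl fun B _ => Finset.sum_comm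
        have a2 : ∑ B, ∑ B', e0 * (w B * w B') = 0 := by
          simp only [← Finset.mul_sum, hsum, mul_zero, Finset.sum_const_zero]
        have a3 : ∑ B, ∑ B', (e1 * ∑ P, inc P B * inc P B') * (w B * w B') = 0 := by
          have : ∀ B B', (e1 * ∑ P, inc P B * inc P B') * (w B * w B') =
              ∑ P, (e1 * inc P B * w B) * (inc P B' * w B') := fun B B' => by
            rw [Finset.mul_sum, Finset.sum_mul]
            refine Finset.sum_congr rfl fun P _ => by ring
          simp only [this]
          refine Finset.sum_eq_zero fun B _ => ?_
          rw [Finset.sum_comm]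
          refine Finset.sum_eq_zero fun P _ => ?_
          rw [← Finset.mul_sum, hpen, mul_zero]
        have a4 : ∑ A, (∑ B, k A B * w B) ^ 2 = ∑ B, ∑ B', g B B' * (w B * w B') := by
          rw [a1]
          have : ∀ B B', g B B' * (w B * w B') = (∑ A, k B A * k B' A) * (w B * w B')
            - e0 * (w B * w B') - (e1 * ∑ P, inc P B * inc P B') * (w B * w B') := fun B B' => by
            simp only [hgdef]; ring
          simp only [this, Finset.sum_sub_distrib]
          rw [a2, a3]; ring
        rw [a4]
        have a5 : ∑ B, ∑ B', g B B' * (w B * w B') ≤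
            ∑ B, ∑ B', (g B B' * (w B ^ 2 / 2) + g B' B * (w B' ^ 2 / 2)) := by
          refine Finset.sum_le_sum fun B _ => Finset.sum_le_sum fun B' _ => ?_
          rw [← hgs B B']
          nlinarith [mul_nonneg (hg0 B B') (sq_nonneg (w B - w B'))]
        refine a5.trans ?_
        simp only [Finset.sum_add_distrib]
        have a6 : ∑ B, ∑ B', g B' B * (w B' ^ 2 / 2) = ∑ B, ∑ B', g B B' * (w B ^ 2 / 2) :=
          Finset.sum_comm
        rw [a6]
        have a7 : ∑ B, ∑ B', g B B' * (w B ^ 2 / 2) ≤ ∑ B, lam ^ 2 * (w B ^ 2 / 2) := by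
          refine Finset.sum_le_sum fun B _ => ?_
          rw [← Finset.sum_mul]
          exact mul_le_mul_of_nonneg_right (h4 B) (by positivity)
        have a8 : ∑ B, lam ^ 2 * (w B ^ 2 / 2) = lam ^ 2 * (∑ B, w B ^ 2) / 2 := by
          rw [← Finset.mul_sum, ← Finset.sum_div]; ring
        linarith) (WithLp.toLp 2 x) (by
        rw [hin]; simpa [one] using hx)
  rw [hn, hn] at key
  simpa [hTa] using key

theorem cross_bound {X : Type*} [Fintype X] [Nonempty X] [DecidableEq X]
    (k : X → X → ℝ) (lam Q : ℝ) (hlam : 0 < lam) (hQ : 0 < Q)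
    (hk : ∀ A B, k A B = k B A)
    (h2 : ∀ A, ∑ B, k A B = lam * Q)
    (hb : ∀ x : X → ℝ, ∑ A, x A = 0 →
      ∑ A, (∑ B, k A B * x B) ^ 2 ≤ lam ^ 2 * ∑ A, x A ^ 2)
    (S T : Finset X) (hST : ∀ A ∈ S, ∀ B ∈ T, k A B = 0) :
    (S.card : ℝ) * (Q + 1) ≤ Fintype.card X ∨ (T.card : ℝ) * (Q + 1) ≤ Fintype.card X := by
  by_contra hcon
  push Not at hcon
  obtain ⟨hS, hT⟩ := hcon
  set N : ℝ := (Fintype.card X : ℝ) with hN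
  have hN0 : 0 < N := by rw [hN]; exact_mod_cast Fintype.card_pos
  set s : ℝ := (S.card : ℝ) with hs
  set t : ℝ := (T.card : ℝ) with ht
  have hsN : s ≤ N := by rw [hs, hN]; exact_mod_cast Finset.card_le_univ S
  have htN : t ≤ N := by rw [ht, hN]; exact_mod_cast Finset.card_le_univ T
  have ind : ∀ S : Finset X, ∑ A, (if A ∈ S then (1 : ℝ) else 0) = S.card := fun S => by simp
  let f : X → ℝ := fun A => (if A ∈ S then (1 : ℝ) else 0) - s / N
  let g : X → ℝ := fun A => (if A ∈ T then (1 : ℝ) else 0) - t / N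
  have hsq : ∀ (S : Finset X) (a : ℝ),
      ∑ A, ((if A ∈ S then (1 : ℝ) else 0) - a) ^ 2 = S.card - 2 * a * S.card + N * a ^ 2 := by
    intro S a
    have : ∀ A, ((if A ∈ S then (1 : ℝ) else 0) - a) ^ 2 =
      (if A ∈ S then (1 : ℝ) else 0) - 2 * a * (if A ∈ S then (1 : ℝ) else 0) + a ^ 2 := fun A => by
      split_ifs <;> ring
    simp only [this, Finset.sum_add_distrib, Finset.sum_sub_distrib, ← Finset.mul_sum, ind]
    simp [hN]
  have hf0 : ∑ A, f A = 0 := by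
    simp only [f, Finset.sum_sub_distrib, ind]
    simp only [Finset.sum_const, Finset.card_univ, nsmul_eq_mul]
    rw [← hN, ← hs]; field_simp; ring
  have hg0 : ∑ A, g A = 0 := by
    simp only [g, Finset.sum_sub_distrib, ind]
    simp only [Finset.sum_const, Finset.card_univ, nsmul_eq_mul]
    rw [← hN, ← ht]; field_simp; ring
  have hff : ∑ A, f A ^ 2 = s * (N - s) / N := by
    simp only [f, hsq]; rw [← hs]; field_simp; ring
  have hgg : ∑ A, g A ^ 2 = t * (N - t) / N := by
    simp only [g, hsq]; rw [← ht]; field_simp; ring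
  have hKg : ∀ A, ∑ B, k A B * g B = ∑ B, k A B * (if B ∈ T then (1 : ℝ) else 0) - lam * Q * (t / N) := by
    intro A
    simp only [g, mul_sub, Finset.sum_sub_distrib, ← Finset.sum_mul, h2]
  have hfKg : ∑ A, f A * ∑ B, k A B * g B = - (lam * Q * s * t / N) := by
    have b1 : ∀ A, f A * ∑ B, k A B * g B = (if A ∈ S then (1 : ℝ) else 0) * ∑ B, k A B * g B
       - s / N * ∑ B, k A B * g B := fun A => by simp only [f]; ring
    have b2 : ∑ A, ∑ B, k A B * g B = 0 := by
      rw [Finset.sum_comm]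
      have : ∀ B, ∑ A, k A B * g B = lam * Q * g B := fun B => by
        rw [← Finset.sum_mul, ← h2 B]
        congr 1
        exact Finset.sum_congr rfl fun A _ => hk A B
      simp only [this, ← Finset.mul_sum, hg0, mul_zero]
    simp only [b1, Finset.sum_sub_distrib, ← Finset.mul_sum, b2, mul_zero, sub_zero]
    have b3 : ∀ A, (if A ∈ S then (1 : ℝ) else 0) * ∑ B, k A B * g B =
        (if A ∈ S then (1 : ℝ) else 0) * (-(lam * Q * (t / N))) := fun A => by
      split_ifs with h
      · rw [hKg]
        have : ∑ B, k A B * (if B ∈ T then (1 : ℝ) else 0) = 0 :=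
          Finset.sum_eq_zero fun B _ => by
            split_ifs with h'
            · rw [hST A h B h']; simp
            · simp
        rw [this]; ring
      · simp
    simp only [b3, ← Finset.sum_mul, ind]
    rw [← hs]; ring
  have hCS := Finset.sum_mul_sq_le_sq_mul_sq Finset.univ f (fun A => ∑ B, k A B * g B)
  rw [hfKg] at hCS
  have hbg := hb g hg0
  have h5 : (lam * Q * s * t / N) ^ 2 ≤ (s * (N - s) / N) * (lam ^ 2 * (t * (N - t) / N)) := by
    calc (lam * Q * s * t / N) ^ 2 = (-(lam * Q * s * t / N)) ^ 2 := by ring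
      _ ≤ _ := hCS
      _ ≤ _ := by
        rw [← hff, ← hgg]
        exact mul_le_mul_of_nonneg_left hbg (Finset.sum_nonneg fun A _ => sq_nonneg _)
  have hs0 : 0 < s := by
    by_contra h
    have : s = 0 := le_antisymm (not_lt.1 h) (by rw [hs]; positivity)
    rw [this] at hS; linarith
  have ht0 : 0 < t := by
    by_contra h
    have : t = 0 := le_antisymm (not_lt.1 h) (by rw [ht]; positivity)
    rw [this] at hT; linarith
  have h6 : (Q * s) * (Q * t) ≤ (N - s) * (N - t) := by
    have e1 : (lam * Q * s * t / N) ^ 2 = (lam ^ 2 * s * t / N ^ 2) * ((Q * s) * (Q * t)) := by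
      field_simp
    have e2 : (s * (N - s) / N) * (lam ^ 2 * (t * (N - t) / N)) =
       (lam ^ 2 * s * t / N ^ 2) * ((N - s) * (N - t)) := by field_simp
    rw [e1, e2] at h5
    exact le_of_mul_le_mul_left h5 (by positivity)
  have h7 : (N - s) * (N - t) < (Q * s) * (Q * t) := by
    have i1 : N - s < Q * s := by nlinarith
    have i2 : N - t < Q * t := by nlinarith
    have : 0 < Q * s := by positivity
    nlinarith
  linarith
end spectral


section cross

theorem prod_sub_pow (q : ℝ) (hq : 1 < q) (r : ℕ) :
    ∏ t ∈ Finset.range r, (q ^ r - q ^ t) =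
      q ^ (r * r) * ∏ t ∈ Finset.range r, (1 - (q ^ (t + 1))⁻¹) := by
  rw [← Finset.prod_range_reflect (fun t => 1 - (q ^ (t + 1))⁻¹), pow_mul]
  have : (q ^ r) ^ r = ∏ t ∈ Finset.range r, q ^ r := by simp
  rw [this, ← Finset.prod_mul_distrib]
  refine Finset.prod_congr rfl fun t ht => ?_
  have ht := Finset.mem_range.1 ht
  have h0 : q ≠ 0 := by linarith
  have h1 : q ^ r = q ^ (r - 1 - t + 1) * q ^ t := by rw [← pow_add]; congr 1; omega
  rw [mul_sub, mul_one, h1]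
  field_simp

theorem C_lower (q : ℝ) (hq : 1 < q) (m : ℕ) (C : ℕ → ℝ)
    (hC : C = fun r => q ^ (m * m) * ∏ t ∈ Finset.range r, (1 - (q ^ (t + 1))⁻¹)) (i : ℕ) (hi : i ≤ m) :
    C m + C (m - 1) * (q ^ m)⁻¹ * ((q ^ i - 1) / (q - 1)) ≤ C (m - i) := by
  have h0 : 0 < q := by linarith
  have hq1 : q - 1 ≠ 0 := by linarith
  have hfac : ∀ t, 0 ≤ 1 - (q ^ (t + 1))⁻¹ := fun t => by
    have : (q ^ (t + 1))⁻¹ ≤ 1 := inv_le_one_of_one_le₀ (one_le_pow₀ hq.le)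
    linarith
  have hC0 : ∀ r, 0 ≤ C r := fun r => by
    rw [hC]; exact mul_nonneg (by positivity) (Finset.prod_nonneg fun t _ => hfac t)
  have hsucc : ∀ r, C r = C (r + 1) + C r * (q ^ (r + 1))⁻¹ := fun r => by
    simp only [hC, Finset.prod_range_succ]; ring
  have hanti : Antitone C := antitone_nat_of_succ_le fun r => by
    have h1 := hsucc r
    have : 0 ≤ C r * (q ^ (r + 1))⁻¹ := mul_nonneg (hC0 r) (by positivity)
    linarith
  induction i with
  | zero => simp
  | succ i ih =>
    have ih := ih (by omega)
    have h1 := hsucc (m - (i + 1))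
    rw [show m - (i + 1) + 1 = m - i by omega] at h1
    have h2 : C (m - 1) ≤ C (m - (i + 1)) := hanti (by omega)
    have h3 : (q ^ (m - i))⁻¹ = q ^ i * (q ^ m)⁻¹ := by
      have : q ^ m = q ^ (m - i) * q ^ i := by rw [← pow_add]; congr 1; omega
      rw [this]; field_simp
    have h4 : C (m - 1) * (q ^ (m - i))⁻¹ ≤ C (m - (i + 1)) * (q ^ (m - i))⁻¹ :=
      mul_le_mul_of_nonneg_right h2 (by positivity)
    have h5 : C (m - 1) * (q ^ m)⁻¹ * ((q ^ (i + 1) - 1) / (q - 1)) =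
        C (m - 1) * (q ^ m)⁻¹ * ((q ^ i - 1) / (q - 1)) + C (m - 1) * (q ^ (m - i))⁻¹ := by
      rw [h3]; field_simp; ring
    rw [h5]; linarith

theorem one_sub_sum_le_prod' (f : ℕ → ℝ) (n : ℕ) (h0 : ∀ t < n, 0 ≤ f t) (h1 : ∀ t < n, f t ≤ 1) :
    1 - ∑ t ∈ Finset.range n, f t ≤ ∏ t ∈ Finset.range n, (1 - f t) ∧
      ∏ t ∈ Finset.range n, (1 - f t) ≤ 1 := by
  induction n with
  | zero => simp
  | succ n ih =>
    obtain ⟨i1, i2⟩ := ih (fun t ht => h0 t (by omega)) (fun t ht => h1 t (by omega))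
    rw [Finset.sum_range_succ, Finset.prod_range_succ]
    have a := h0 n (by omega)
    have b := h1 n (by omega)
    have c : 0 ≤ ∏ t ∈ Finset.range n, (1 - f t) := Finset.prod_nonneg fun t ht => by
      have := h1 t (by have := Finset.mem_range.1 ht; omega)
      linarith
    constructor <;> nlinarith

/-- the numeric bound on the row sums -/
theorem row_numeric (q : ℝ) (hq : 2 ≤ q) (m : ℕ) (hm : 1 ≤ m) (C : ℕ → ℝ)
    (hC : C = fun r => q ^ (m * m) * ∏ t ∈ Finset.range r, (1 - (q ^ (t + 1))⁻¹)) (N p : ℝ)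
    (hN : N * ∏ t ∈ Finset.range m, (q ^ m - q ^ t) = ∏ t ∈ Finset.range m, (q ^ (2 * m) - q ^ t))
    (hp : p * (q ^ m + 1) = N) :
    (q ^ (m * m)) ^ 2 - C m * N - C (m - 1) * (q ^ m)⁻¹ * ((q ^ m - 1) / (q - 1) * p)
      ≤ (q ^ (m * m) / q ^ m) ^ 2 := by
  have h0 : 0 < q := by linarith
  have hq1 : 0 < q - 1 := by linarith
  set Q := q ^ m with hQ
  have hQ2 : 2 ≤ Q := by
    calc (2 : ℝ) ≤ q := hq
      _ = q ^ 1 := by simp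
      _ ≤ q ^ m := pow_le_pow_right₀ (by linarith) hm
  have hCm : C m = ∏ t ∈ Finset.range m, (q ^ m - q ^ t) := by
    rw [prod_sub_pow q (by linarith), hC]
  have hZ : C m * N = (q ^ (m * m)) ^ 2 * ∏ t ∈ Finset.range m, (1 - q ^ t / q ^ (2 * m)) := by
    rw [hCm, mul_comm, hN]
    have : (q ^ (m * m)) ^ 2 = ∏ t ∈ Finset.range m, q ^ (2 * m) := by
      simp only [Finset.prod_const, Finset.card_range, ← pow_mul]; congr 1; ring
    rw [this, ← Finset.prod_mul_distrib]
    refine Finset.prod_congr rfl fun t _ => ?_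
    field_simp
  set Z := ∏ t ∈ Finset.range m, (1 - q ^ t / q ^ (2 * m)) with hZdef
  set y := (Q - 1) / ((q - 1) * Q ^ 2) with hy
  have hZy : 1 - y ≤ Z := by
    have h1 := one_sub_sum_le_prod' (fun t => q ^ t / q ^ (2 * m)) m (fun t _ => by positivity) (fun t ht => by
        rw [div_le_one (by positivity)]
        exact pow_le_pow_right₀ (by linarith) (by omega))
    have h2 : ∑ t ∈ Finset.range m, q ^ t / q ^ (2 * m) = y := by
      rw [← Finset.sum_div, geom_sum_eq (by linarith), hy, mul_comm 2 m, pow_mul, div_div]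
    rw [h2] at h1
    exact h1.1
  have hCm1 : C m = C (m - 1) * (1 - Q⁻¹) := by
    obtain ⟨n, rfl⟩ : ∃ n, m = n + 1 := ⟨m - 1, by omega⟩
    simp only [hC, Nat.add_sub_cancel, Finset.prod_range_succ, hQ]; ring
  have hthird : C (m - 1) * Q⁻¹ * ((Q - 1) / (q - 1) * p) = (C m * N) * (1 / ((q - 1) * (Q + 1))) := by
    rw [hCm1, ← hp]
    have : Q ≠ 0 := by linarith
    have : Q + 1 ≠ 0 := by linarith
    field_simp
  rw [hthird, hZ]
  set z := 1 / ((q - 1) * (Q + 1)) with hz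
  have hy0 : 0 ≤ y := div_nonneg (by linarith) (by positivity)
  have hyQ : y ≤ 1 / Q := by
    rw [hy, div_le_div_iff₀ (by positivity) (by linarith)]
    nlinarith
  have hy1 : y ≤ 1 := hyQ.trans (by rw [div_le_one (by linarith)]; linarith)
  have hyz : y ≤ z := by
    rw [hy, hz, div_le_div_iff₀ (by positivity) (by positivity)]
    have : (Q - 1) * (Q + 1) ≤ Q ^ 2 := by nlinarith
    nlinarith
  have hfin : 1 - Z - Z * z ≤ (1 / Q) ^ 2 := by
    have h1 : (1 - y) * (1 + y) ≤ Z * (1 + z) :=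
      mul_le_mul hZy (by linarith) (by linarith) (by linarith)
    have h2 : y ^ 2 ≤ (1 / Q) ^ 2 := pow_le_pow_left₀ hy0 hyQ 2
    nlinarith
  have hD : 0 ≤ (q ^ (m * m)) ^ 2 := by positivity
  have := mul_le_mul_of_nonneg_left hfin hD
  calc _ = (q ^ (m * m)) ^ 2 * (1 - Z - Z * z) := by ring
    _ ≤ _ := this
    _ = _ := by field_simp

variable {F V : Type*} [Field F] [Fintype F] [AddCommGroup V] [Module F V] [Finite V]

/-- number of points of a subspace -/
theorem card_points (W : Submodule F V) (hW : 1 ≤ finrank F W) :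
    (Nat.card {P : Submodule F V // finrank F P = 1 ∧ P ≤ W} : ℚ) =
      gaussBinom (Fintype.card F) (finrank F W) 1 := by
  rw [← card_subspaces (F := F) (V := W) 1 hW]
  congr 1
  refine Nat.card_congr
    { toFun := fun P => ⟨P.1.comap W.subtype, by
        rw [(Submodule.comapSubtypeEquivOfLe P.2.2).finrank_eq, P.2.1]⟩
      invFun := fun P => ⟨P.1.map W.subtype, by
        rw [Submodule.finrank_map_subtype_eq, P.2], Submodule.map_subtype_le _ _⟩
      left_inv := fun P => by
        ext1; simp [Submodule.map_comap_subtype, P.2.2]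
      right_inv := fun P => by
        ext1; simp [Submodule.comap_map_eq_of_injective W.subtype_injective] }

theorem card_points_real (W : Submodule F V) :
    (Nat.card {P : Submodule F V // finrank F P = 1 ∧ P ≤ W} : ℝ) =
      ((Fintype.card F : ℝ) ^ finrank F W - 1) / (Fintype.card F - 1) := by
  rcases Nat.eq_zero_or_pos (finrank F W) with h | h
  · have : IsEmpty {P : Submodule F V // finrank F P = 1 ∧ P ≤ W} := ⟨fun P => by
      have := Submodule.finrank_mono P.2.2
      have := P.2.1
      omega⟩
    rw [h]; simp
  · have := card_points W h
    rw [gb_one] at this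
    have := congrArg (Rat.cast : ℚ → ℝ) this
    push_cast at this
    exact this

theorem inf_eq_bot_iff_isCompl (m : ℕ) (hV : finrank F V = 2 * m) (A B : Submodule F V)
    (hA : finrank F A = m) (hB : finrank F B = m) : A ⊓ B = ⊥ ↔ IsCompl A B := by
  refine ⟨fun h => IsCompl.of_eq h ?_, fun h => h.inf_eq_bot⟩
  apply Submodule.eq_top_of_finrank_eq
  have := Submodule.finrank_sup_add_finrank_inf_eq A B
  rw [h, finrank_bot] at this
  omega

theorem sum_ite_card {X : Type*} [Fintype X] (p : X → Prop) [DecidablePred p] :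
    ∑ x, (if p x then (1 : ℝ) else 0) = Nat.card {x // p x} := by
  rw [Finset.sum_boole, Nat.card_eq_fintype_card, Fintype.card_subtype]

set_option maxHeartbeats 2000000 in
theorem cross_subspaces (m : ℕ) (hm : 1 ≤ m) (hV : finrank F V = 2 * m)
    (S T : Finset {W : Submodule F V // finrank F W = m})
    (hST : ∀ A ∈ S, ∀ B ∈ T, A.1 ⊓ B.1 ≠ ⊥) :
    S.card * (Fintype.card F ^ m + 1) ≤ Nat.card {W : Submodule F V // finrank F W = m} ∨
    T.card * (Fintype.card F ^ m + 1) ≤ Nat.card {W : Submodule F V // finrank F W = m} := by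
  classical
  let X := {W : Submodule F V // finrank F W = m}
  let Pt := {P : Submodule F V // finrank F P = 1}
  have : Fintype X := Fintype.ofFinite _
  have : Fintype Pt := Fintype.ofFinite _
  set q : ℝ := (Fintype.card F : ℝ) with hq
  have hq2 : (2 : ℝ) ≤ q := by rw [hq]; exact_mod_cast two_le_card (F := F)
  have hq0 : 0 < q := by linarith
  let k : X → X → ℝ := fun A B => if A.1 ⊓ B.1 = ⊥ then 1 else 0
  let inc : Pt → X → ℝ := fun P A => if P.1 ≤ A.1 then 1 else 0
  set C : ℕ → ℝ := fun r => q ^ (m * m) * ∏ t ∈ Finset.range r, (1 - (q ^ (t + 1))⁻¹) with hC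
  have hk : ∀ A B, k A B = k B A := fun A B => by simp only [k, inf_comm]
  have hkk : ∀ A A' : X, ∑ B, k A B * k A' B =
      C (m - finrank F (A.1 ⊓ A'.1 : Submodule F V)) := by
    intro A A'
    have hle : finrank F (A.1 ⊓ A'.1 : Submodule F V) ≤ m :=
      (Submodule.finrank_mono inf_le_left).trans A.2.le
    have hc := card_common_compl m A.1 A'.1 hV A.2 A'.2
      (m - finrank F (A.1 ⊓ A'.1 : Submodule F V)) (by omega)
    set r := m - finrank F (A.1 ⊓ A'.1 : Submodule F V) with hr
    have e1 : ∑ B, k A B * k A' B =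
        (Nat.card {B : Submodule F V // IsCompl A.1 B ∧ IsCompl A'.1 B} : ℝ) := by
      have : ∀ B, k A B * k A' B = if (A.1 ⊓ B.1 = ⊥ ∧ A'.1 ⊓ B.1 = ⊥) then 1 else 0 := fun B => by
        simp only [k]; split_ifs <;> simp_all
      simp only [this]
      rw [sum_ite_card]
      congr 1
      refine Nat.card_congr
        { toFun := fun B => ⟨B.1.1, (inf_eq_bot_iff_isCompl m hV _ _ A.2 B.1.2).1 B.2.1,
            (inf_eq_bot_iff_isCompl m hV _ _ A'.2 B.1.2).1 B.2.2⟩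
          invFun := fun B => ⟨⟨B.1, by
            have := Submodule.finrank_add_eq_of_isCompl B.2.1
            have := A.2
            omega⟩, B.2.1.inf_eq_bot, B.2.2.inf_eq_bot⟩
          left_inv := fun B => rfl
          right_inv := fun B => rfl }
    rw [e1]
    have hc' := congrArg (Nat.cast : ℕ → ℝ) hc
    have hp : ((∏ i : Fin r, (Fintype.card F ^ r - Fintype.card F ^ i.val) : ℕ) : ℝ) =
        ∏ t ∈ Finset.range r, (q ^ r - q ^ t) := by
      have := congrArg (Rat.cast : ℚ → ℝ) (cast_prod_sub (Fintype.card F) r r two_le_card le_rfl)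
      push_cast at this ⊢
      exact this
    rw [Nat.cast_mul, Nat.cast_mul, hp, prod_sub_pow q (by linarith)] at hc'
    push_cast at hc'
    rw [← hq] at hc'
    have hne : q ^ (r * r) ≠ 0 := by positivity
    apply mul_right_cancel₀ hne
    rw [hc', hC]; ring
  have hpt : ∀ A A' : X, ∑ P, inc P A * inc P A' =
      (q ^ finrank F (A.1 ⊓ A'.1 : Submodule F V) - 1) / (q - 1) := by
    intro A A'
    rw [hq, ← card_points_real (A.1 ⊓ A'.1)]
    have : ∀ P, inc P A * inc P A' = if (P.1 ≤ A.1 ⊓ A'.1) then 1 else 0 := fun P => by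
      simp only [inc, le_inf_iff]; split_ifs <;> simp_all
    simp only [this]
    rw [sum_ite_card]
    congr 1
    exact Nat.card_congr (Equiv.subtypeSubtypeEquivSubtypeInter
      (fun P : Submodule F V => finrank F P = 1) (fun P => P ≤ A.1 ⊓ A'.1))
  have h2 : ∀ A, ∑ B, k A B = q ^ (m * m) := by
    intro A
    have h := hkk A A
    rw [inf_idem, A.2, Nat.sub_self] at h
    simp only [hC, Finset.range_zero, Finset.prod_empty, mul_one] at h
    rw [← h]
    refine Finset.sum_congr rfl fun B _ => ?_
    simp only [k]; split_ifs <;> simp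
  have h1 : ∀ P A, ∑ B, k A B * inc P B = (q ^ (m * m) / q ^ m) * (1 - inc P A) := by
    intro P A
    by_cases hPA : P.1 ≤ A.1
    · have : inc P A = 1 := if_pos hPA
      rw [this, sub_self, mul_zero]
      refine Finset.sum_eq_zero fun B _ => ?_
      simp only [k, inc]
      split_ifs with a b
      · exfalso
        have : P.1 ≤ A.1 ⊓ B.1 := le_inf hPA b
        rw [a, le_bot_iff] at this
        have h := P.2
        rw [this, finrank_bot] at h
        omega
      all_goals simp
    · have : inc P A = 0 := if_neg hPA
      rw [this, sub_zero, mul_one]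
      have hd : Disjoint A.1 P.1 := by
        rw [disjoint_iff]
        by_contra hne
        have h1 : finrank F (A.1 ⊓ P.1 : Submodule F V) ≠ 0 := by
          rwa [Ne, Submodule.finrank_eq_zero]
        have h2 : finrank F P.1 = 1 := P.2
        have h3 : A.1 ⊓ P.1 = P.1 := Submodule.eq_of_le_of_finrank_le inf_le_right (by omega)
        exact hPA (h3 ▸ inf_le_left)
      have hc := card_compl_pt m A.1 P.1 hV A.2 P.2 hd
      have e1 : ∑ B, k A B * inc P B =
          (Nat.card {B : Submodule F V // IsCompl A.1 B ∧ P.1 ≤ B} : ℝ) := by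
        have : ∀ B, k A B * inc P B = if (A.1 ⊓ B.1 = ⊥ ∧ P.1 ≤ B.1) then 1 else 0 := fun B => by
          simp only [k, inc]; split_ifs <;> simp_all
        simp only [this]
        rw [sum_ite_card]
        congr 1
        refine Nat.card_congr
          { toFun := fun B => ⟨B.1.1, (inf_eq_bot_iff_isCompl m hV _ _ A.2 B.1.2).1 B.2.1, B.2.2⟩
            invFun := fun B => ⟨⟨B.1, by
              have := Submodule.finrank_add_eq_of_isCompl B.2.1
              have := A.2
              omega⟩, B.2.1.inf_eq_bot, B.2.2⟩
            left_inv := fun B => rfl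
            right_inv := fun B => rfl }
      rw [e1, eq_div_iff (by positivity)]
      rw [hq]
      exact_mod_cast hc
  -- counts
  have hNp : ∀ P : Pt, (Nat.card {R : Submodule F V // finrank F R = m ∧ P.1 ≤ R} : ℝ) * (q ^ m + 1)
      = Nat.card X := by
    intro P
    have hP : finrank F P.1 = 1 := P.2
    have a := card_subspaces_ge' P.1 m (by omega) (by omega)
    have b := card_subspaces (F := F) (V := V) m (by omega)
    rw [hV, hP] at a
    rw [hV] at b
    obtain ⟨n, rfl⟩ : ∃ n, m = n + 1 := ⟨m - 1, by omega⟩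
    have c := gb_succ_succ (Fintype.card F) (2 * (n + 1) - 1) n two_le_card
    rw [show 2 * (n + 1) - 1 + 1 = 2 * (n + 1) by omega] at c
    rw [Nat.add_sub_cancel] at a
    rw [← a, ← b] at c
    have c' := congrArg (Rat.cast : ℚ → ℝ) c
    push_cast at c'
    rw [← hq] at c'
    have hQ1 : q ^ (n + 1) - 1 ≠ 0 := by
      have := one_lt_pow₀ (show 1 < q by linarith) (n := n + 1) (by omega)
      linarith
    apply mul_right_cancel₀ hQ1
    rw [c', mul_comm 2 (n + 1), pow_mul]; ring
  have hN : (Nat.card X : ℝ) * ∏ t ∈ Finset.range m, (q ^ m - q ^ t) =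
      ∏ t ∈ Finset.range m, (q ^ (2 * m) - q ^ t) := by
    have h := congrArg (Nat.cast : ℕ → ℚ) (card_subspaces_mul (F := F) (V := V) m (by omega))
    rw [Nat.cast_mul, cast_prod_sub _ _ _ two_le_card le_rfl,
      cast_prod_sub _ _ _ two_le_card (by omega), hV] at h
    have c' := congrArg (Rat.cast : ℚ → ℝ) h
    push_cast at c'
    exact c'
  rcases S.eq_empty_or_nonempty with rfl | ⟨A0, hA0⟩
  · left; simp
  have : Nonempty X := ⟨A0⟩
  have hb := kernel_bound k inc (q ^ (m * m) / q ^ m) (q ^ (m * m)) (C m)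
    (C (m - 1) * (q ^ m)⁻¹) hk h1 h2 (by
      intro A A'
      rw [hkk, hpt]
      exact C_lower q (by linarith) m C hC _ ((Submodule.finrank_mono inf_le_left).trans A.2.le)) (by
      intro A
      rw [Finset.sum_sub_distrib, Finset.sum_sub_distrib]
      have r1 : ∑ A', ∑ B, k A B * k A' B = (q ^ (m * m)) ^ 2 := by
        rw [Finset.sum_comm]
        have : ∀ B, ∑ A', k A B * k A' B = k A B * q ^ (m * m) := fun B => by
          rw [← Finset.mul_sum]
          congr 1
          rw [← h2 B]
          exact Finset.sum_congr rfl fun A' _ => hk _ _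
        simp only [this, ← Finset.sum_mul, h2]; ring
      have r2 : ∑ _A' : X, C m = C m * Nat.card X := by
        rw [Finset.sum_const, Finset.card_univ, Nat.card_eq_fintype_card, nsmul_eq_mul, mul_comm]
      have r3 : ∑ A', C (m - 1) * (q ^ m)⁻¹ * ∑ P, inc P A * inc P A' =
          C (m - 1) * (q ^ m)⁻¹ * ((q ^ m - 1) / (q - 1) * (Nat.card X / (q ^ m + 1))) := by
        rw [← Finset.mul_sum]
        congr 1
        rw [Finset.sum_comm]
        have : ∀ P, ∑ A', inc P A * inc P A' = inc P A * (Nat.card X / (q ^ m + 1)) := fun P => by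
          rw [← Finset.mul_sum]
          congr 1
          rw [eq_div_iff (by positivity), ← hNp P]
          congr 1
          simp only [inc]
          rw [sum_ite_card]
          congr 1
          exact Nat.card_congr (Equiv.subtypeSubtypeEquivSubtypeInter
            (fun R : Submodule F V => finrank F R = m) (fun R => P.1 ≤ R))
        simp only [this, ← Finset.sum_mul]
        congr 1
        have h := hpt A A
        rw [inf_idem, A.2] at h
        rw [← h]
        refine Finset.sum_congr rfl fun P _ => ?_
        simp only [inc]; split_ifs <;> simp
      rw [r1, r2, r3]
      exact row_numeric q hq2 m hm C hC _ _ hN (by field_simp))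
  have := cross_bound k (q ^ (m * m) / q ^ m) (q ^ m) (by positivity) (by positivity) hk
    (fun A => by rw [h2]; field_simp) hb S T (fun A hA B hB => if_neg (hST A hA B hB))
  rw [← Nat.card_eq_fintype_card] at this
  refine this.imp (fun h => ?_) (fun h => ?_)
  · rw [hq] at h; exact_mod_cast h
  · rw [hq] at h; exact_mod_cast h

end cross


section main
variable {F V : Type*} [Field F] [Fintype F] [AddCommGroup V] [Module F V] [Finite V]

theorem card_compl_ge (A D : Submodule F V) (h : Disjoint A D) :
    Nat.card {B : Submodule F V // IsCompl A B ∧ D ≤ B} *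
      Fintype.card F ^ (finrank F A * finrank F A + finrank F D * finrank F A)
      =  Fintype.card F ^ (finrank F V * finrank F A) := by
  have : Finite (V →ₗ[F] A) := DFunLike.finite _
  have step1 : Nat.card {B : Submodule F V // IsCompl A B ∧ D ≤ B} =
      Nat.card {f : V →ₗ[F] A // (∀ x : A, f x = x) ∧ ∀ x ∈ D, f x = 0} := by
    have e1 := Equiv.subtypeEquiv (p := fun B => D ≤ B.1)
      (q := fun f => ∀ x ∈ D, f.1 x = 0) A.isComplEquivProj (by
        rintro ⟨B, hB⟩
        have hk : LinearMap.ker (A.isComplEquivProj ⟨B, hB⟩).1 = B := by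
          have := A.isComplEquivProj.symm_apply_apply ⟨B, hB⟩
          exact congrArg Subtype.val this
        constructor
        · intro h x hx
          have : x ∈ B := h hx
          rw [← hk] at this
          exact this
        · intro h x hx
          have := h x hx
          rw [← LinearMap.mem_ker, hk] at this
          exact this)
    refine Nat.card_congr ?_
    exact ((Equiv.subtypeSubtypeEquivSubtypeInter _ _).symm.trans e1).trans
      (Equiv.subtypeSubtypeEquivSubtypeInter (fun f : V →ₗ[F] A => ∀ x : A, f x = x)
        (fun f => ∀ x ∈ D, f x = 0))
  let L : (V →ₗ[F] A) →ₗ[F] (A →ₗ[F] A) × (D →ₗ[F] A) :=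
    LinearMap.prod (LinearMap.lcomp F A A.subtype) (LinearMap.lcomp F A D.subtype)
  have hL : Function.Surjective L := by
    rintro ⟨a, b⟩
    obtain ⟨f, hf1, hf2⟩ := exists_pair_extend A D h a b
    exact ⟨f, Prod.ext hf1 hf2⟩
  have step2 := card_preimage_linear L hL (fun z => z = (LinearMap.id, 0))
  have step3 : Nat.card {f : V →ₗ[F] A // (∀ x : A, f x = x) ∧ ∀ x ∈ D, f x = 0} =
      Nat.card {f : V →ₗ[F] A // L f = (LinearMap.id, 0)} := by
    refine Nat.card_congr (Equiv.subtypeEquivRight fun f => ?_)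
    rw [Prod.ext_iff]
    refine and_congr ?_ ?_
    · constructor
      · intro h; ext x; exact congrArg _ (h x)
      · intro h x; exact LinearMap.congr_fun h x
    · constructor
      · intro h; ext x; exact congrArg _ (h x x.2)
      · intro h x hx; exact LinearMap.congr_fun h ⟨x, hx⟩
  rw [← step3, ← step1, Module.finrank_prod, Module.finrank_linearMap, Module.finrank_linearMap,
    Module.finrank_linearMap] at step2
  simpa only [Nat.card_unique, one_mul] using step2

theorem exists_point_le (W : Submodule F V) (h : W ≠ ⊥) :
    ∃ P : Submodule F V, finrank F P = 1 ∧ P ≤ W := by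
  obtain ⟨v, hv, h0⟩ := W.ne_bot_iff.1 h
  refine ⟨F ∙ v, finrank_span_singleton h0, ?_⟩
  rwa [Submodule.span_singleton_le_iff_mem]

theorem point_inf_eq_bot (P W : Submodule F V) (hP : finrank F P = 1) (h : ¬ P ≤ W) : P ⊓ W = ⊥ := by
  by_contra hne
  have h1 : finrank F (P ⊓ W : Submodule F V) ≠ 0 := by
    rwa [Ne, Submodule.finrank_eq_zero]
  have h3 : P ⊓ W = P := Submodule.eq_of_le_of_finrank_le inf_le_left (by omega)
  exact h (h3 ▸ inf_le_right)

theorem finrank_map_mkQ (L R : Submodule F V) :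
    finrank F (R.map L.mkQ) + finrank F (R ⊓ L : Submodule F V) = finrank F R := by
  have h1 := LinearMap.finrank_range_add_finrank_ker (L.mkQ.domRestrict R)
  rw [LinearMap.range_domRestrict] at h1
  rw [← h1]
  congr 1
  rw [LinearMap.ker_domRestrict, Submodule.ker_mkQ, ← Submodule.map_comap_subtype R L]
  exact Submodule.finrank_map_subtype_eq _ _

theorem cross_subspaces' (m : ℕ) (hm : 1 ≤ m) (hV : finrank F V = 2 * m)
    (S T : Finset (Submodule F V)) (hS : ∀ A ∈ S, finrank F A = m) (hT : ∀ A ∈ T, finrank F A = m)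
    (hST : ∀ A ∈ S, ∀ B ∈ T, A ⊓ B ≠ ⊥) :
    (S.card : ℚ) * ((Fintype.card F : ℚ) ^ m + 1) ≤ gaussBinom (Fintype.card F) (2 * m) m ∨
    (T.card : ℚ) * ((Fintype.card F : ℚ) ^ m + 1) ≤ gaussBinom (Fintype.card F) (2 * m) m := by
  classical
  have h := cross_subspaces m hm hV (S.subtype fun W : Submodule F V => finrank F W = m)
    (T.subtype fun W : Submodule F V => finrank F W = m) (fun A hA B hB =>
      hST _ (Finset.mem_subtype.1 hA) _ (Finset.mem_subtype.1 hB))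
  rw [Finset.card_subtype, Finset.card_subtype, Finset.filter_true_of_mem hS,
    Finset.filter_true_of_mem hT] at h
  have b := card_subspaces (F := F) (V := V) m (by omega)
  rw [hV] at b
  rw [← b]
  exact_mod_cast h

open Classical in
theorem count_ge (k : ℕ) (Y : Finset (Submodule F V)) (hdim : ∀ R ∈ Y, finrank F R = k)
    (W : Submodule F V) (hW : finrank F W ≤ k) (hk : k ≤ finrank F V) :
    ((Y.filter (W ≤ ·)).card : ℚ) ≤
      gaussBinom (Fintype.card F) (finrank F V - finrank F W) (k - finrank F W) := by
  rw [← card_subspaces_ge' W k hW hk]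
  have : Fintype (Submodule F V) := Fintype.ofFinite _
  rw [Nat.card_eq_fintype_card, Fintype.card_subtype]
  refine Nat.cast_le.2 (Finset.card_le_card fun R hR => ?_)
  rw [Finset.mem_filter] at hR ⊢
  exact ⟨Finset.mem_univ _, hdim R hR.1, hR.2⟩

open Classical in
theorem count_step (k : ℕ) (hk : 1 ≤ k) (Y : Finset (Submodule F V))
    (hdim : ∀ R ∈ Y, finrank F R = k) (hint : ∀ R ∈ Y, ∀ S ∈ Y, R ⊓ S ≠ ⊥)
    (W : Submodule F V) (R1 : Submodule F V) (hR1 : R1 ∈ Y) (hWR : W ⊓ R1 = ⊥) (M : ℚ)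
    (hM : ∀ W' : Submodule F V, finrank F W' = finrank F W + 1 → W ≤ W' →
      ((Y.filter (W' ≤ ·)).card : ℚ) ≤ M) :
    ((Y.filter (W ≤ ·)).card : ℚ) ≤ gaussBinom (Fintype.card F) k 1 * M := by
  have : Fintype (Submodule F V) := Fintype.ofFinite _
  have hc := card_points R1 (by rw [hdim R1 hR1]; exact hk)
  rw [hdim R1 hR1, Nat.card_eq_fintype_card, Fintype.card_subtype] at hc
  set pts := Finset.univ.filter (fun P : Submodule F V => finrank F P = 1 ∧ P ≤ R1) with hpts
  have hsub : Y.filter (W ≤ ·) ⊆ pts.biUnion (fun Q => Y.filter (W ⊔ Q ≤ ·)) := by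
    intro R hR
    rw [Finset.mem_filter] at hR
    obtain ⟨Q, hQ1, hQ2⟩ := exists_point_le _ (hint R hR.1 R1 hR1)
    rw [Finset.mem_biUnion]
    refine ⟨Q, by rw [hpts, Finset.mem_filter]; exact ⟨Finset.mem_univ _, hQ1, hQ2.trans inf_le_right⟩, ?_⟩
    rw [Finset.mem_filter]
    exact ⟨hR.1, sup_le hR.2 (hQ2.trans inf_le_left)⟩
  calc ((Y.filter (W ≤ ·)).card : ℚ)
      ≤ ((pts.biUnion (fun Q => Y.filter (W ⊔ Q ≤ ·))).card : ℚ) :=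
        Nat.cast_le.2 (Finset.card_le_card hsub)
    _ ≤ ((∑ Q ∈ pts, (Y.filter (W ⊔ Q ≤ ·)).card : ℕ) : ℚ) := Nat.cast_le.2 Finset.card_biUnion_le
    _ = ∑ Q ∈ pts, ((Y.filter (W ⊔ Q ≤ ·)).card : ℚ) := by push_cast; rfl
    _ ≤ ∑ Q ∈ pts, M := by
      refine Finset.sum_le_sum fun Q hQ => hM _ ?_ le_sup_left
      rw [hpts, Finset.mem_filter] at hQ
      have h1 := Submodule.finrank_sup_add_finrank_inf_eq W Q
      have h2 : W ⊓ Q = ⊥ := by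
        rw [← le_bot_iff, ← hWR]; exact inf_le_inf_left _ hQ.2.2
      rw [h2, finrank_bot, hQ.2.1] at h1
      omega
    _ = _ := by rw [Finset.sum_const, nsmul_eq_mul, hc]

/-- fibre bound -/
theorem fibre_bound (k : ℕ) (hV : finrank F V = 2 * k) (P Q : Submodule F V)
    (hQ : finrank F Q = 1) (hP : finrank F P = 1) (hk : 1 ≤ k)
    (X : Submodule F V) (Z : Finset (Submodule F V))
    (hX : finrank F X = k + 1)
    (hZ : ∀ R ∈ Z, finrank F R = k ∧ P ≤ R ∧ R ⊔ Q = X) :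
    Z.card ≤ Fintype.card F ^ (k - 1) := by
  classical
  rcases Z.eq_empty_or_nonempty with rfl | ⟨R0, hR0⟩
  · simp
  obtain ⟨E, hE⟩ := exists_isCompl X
  have hEr : finrank F E = k - 1 := by
    have := Submodule.finrank_add_eq_of_isCompl hE
    omega
  have hcompl : ∀ R ∈ Z, IsCompl Q (R ⊔ E) := by
    intro R hR
    obtain ⟨h1, h2, h3⟩ := hZ R hR
    have htop : Q ⊔ (R ⊔ E) = ⊤ := by
      rw [← sup_assoc, sup_comm Q R, h3, hE.sup_eq_top]
    refine IsCompl.of_eq ?_ htop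
    rw [← Submodule.finrank_eq_zero (R := F)]
    have a := Submodule.finrank_sup_add_finrank_inf_eq Q (R ⊔ E)
    have b := Submodule.finrank_sup_add_finrank_inf_eq R E
    rw [htop, finrank_top] at a
    omega
  have hdis : Disjoint Q (P ⊔ E) :=
    (hcompl R0 hR0).disjoint.mono_right (sup_le_sup_right (hZ R0 hR0).2.1 _)
  have hPE : finrank F (P ⊔ E : Submodule F V) = k := by
    have a := Submodule.finrank_sup_add_finrank_inf_eq P E
    have : P ⊓ E = ⊥ := by
      rw [← le_bot_iff, ← hE.inf_eq_bot]
      refine inf_le_inf_right _ ((hZ R0 hR0).2.1.trans ?_)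
      rw [← (hZ R0 hR0).2.2]; exact le_sup_left
    rw [this, finrank_bot] at a
    omega
  have hcount := card_compl_ge Q (P ⊔ E) hdis
  rw [hPE, hV, hQ, mul_one, mul_one, mul_one] at hcount
  have hc2 : Nat.card {B : Submodule F V // IsCompl Q B ∧ P ⊔ E ≤ B} = Fintype.card F ^ (k - 1) := by
    have hq0 : 0 < Fintype.card F ^ (1 + k) := pow_pos Fintype.card_pos _
    apply Nat.eq_of_mul_eq_mul_right hq0
    rw [hcount, ← pow_add]
    congr 1; omega
  rw [← hc2]
  have hinj : Set.InjOn (fun R => R ⊔ E) (Z : Set (Submodule F V)) := by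
    intro R hR R' hR' h
    have hrec : ∀ R ∈ Z, (R ⊔ E) ⊓ X = R := by
      intro R hR
      have hRX : R ≤ X := by rw [← (hZ R hR).2.2]; exact le_sup_left
      rw [sup_inf_assoc_of_le _ hRX, inf_comm, hE.inf_eq_bot, sup_bot_eq]
    rw [← hrec R hR, ← hrec R' hR']
    exact congrArg (· ⊓ X) h
  have : Fintype (Submodule F V) := Fintype.ofFinite _
  rw [Nat.card_eq_fintype_card, Fintype.card_subtype, ← Finset.card_image_of_injOn hinj]
  refine Finset.card_le_card fun B hB => ?_
  obtain ⟨R, hR, rfl⟩ := Finset.mem_image.1 hB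
  rw [Finset.mem_filter]
  exact ⟨Finset.mem_univ _, hcompl R hR, sup_le_sup_right (hZ R hR).2.1 _⟩

open Classical in
theorem pair_bound (k : ℕ) (hk : 2 ≤ k) (hV : finrank F V = 2 * k) (Y : Finset (Submodule F V))
    (hdim : ∀ R ∈ Y, finrank F R = k) (hint : ∀ R ∈ Y, ∀ S ∈ Y, R ⊓ S ≠ ⊥)
    (P Q : Submodule F V) (hP : finrank F P = 1) (hQ : finrank F Q = 1) (hPQ : P ≠ Q)
    (T E : ℚ) (hT : gaussBinom (Fintype.card F) (2 * (k - 1)) (k - 1) = T * ((Fintype.card F : ℚ) ^ (k - 1) + 1))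
    (hE : E = (Fintype.card F : ℚ) ^ (k - 1) * T + gaussBinom (Fintype.card F) (2 * k - 2) (k - 2)) :
    ((Y.filter (P ≤ ·)).card : ℚ) ≤ E ∨ ((Y.filter (Q ≤ ·)).card : ℚ) ≤ E := by
  set q := Fintype.card F with hq
  have hPQi : P ⊓ Q = ⊥ := point_inf_eq_bot P Q hP fun h =>
    hPQ (Submodule.eq_of_le_of_finrank_eq h (by omega))
  have hLr : finrank F (P ⊔ Q : Submodule F V) = 2 := by
    have a := Submodule.finrank_sup_add_finrank_inf_eq P Q
    rw [hPQi, finrank_bot] at a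
    omega
  set L := P ⊔ Q with hL
  have : Finite (V ⧸ L) := Quotient.finite _
  have hVL : finrank F (V ⧸ L) = 2 * (k - 1) := by
    have := L.finrank_quotient_add_finrank
    omega
  -- general facts, symmetric in the two points
  have gen : ∀ P Q : Submodule F V, finrank F P = 1 → finrank F Q = 1 → P ⊔ Q = L →
      (∀ R ∈ Y, P ≤ R → ¬ Q ≤ R → R ⊓ L = P ∧ finrank F (R.map L.mkQ) = k - 1) ∧
      ((Y.filter (P ≤ ·)).card : ℚ) ≤
        (((Y.filter (fun R => P ≤ R ∧ ¬ Q ≤ R)).image (Submodule.map L.mkQ)).card : ℚ) * (q : ℚ) ^ (k - 1)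
        + gaussBinom q (2 * k - 2) (k - 2) := by
    intro P Q hP hQ hPQL
    have f1 : ∀ R ∈ Y, P ≤ R → ¬ Q ≤ R → R ⊓ L = P ∧ finrank F (R.map L.mkQ) = k - 1 := by
      intro R hR hPR hQR
      have h1 : R ⊓ L < L := by
        refine lt_of_le_of_ne inf_le_right fun h => hQR ?_
        have : L ≤ R := h ▸ inf_le_left
        exact (hPQL ▸ le_sup_right : Q ≤ L).trans this
      have h2 := Submodule.finrank_lt_finrank_of_lt h1
      have h3 : P ≤ R ⊓ L := le_inf hPR (hPQL ▸ le_sup_left)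
      have h4 : P = R ⊓ L := Submodule.eq_of_le_of_finrank_le h3 (by omega)
      refine ⟨h4.symm, ?_⟩
      have h5 := finrank_map_mkQ L R
      rw [← h4, hdim R hR] at h5
      omega
    refine ⟨f1, ?_⟩
    set Z := Y.filter (fun R => P ≤ R ∧ ¬ Q ≤ R) with hZ
    have hsub : Y.filter (P ≤ ·) ⊆ Z ∪ Y.filter (L ≤ ·) := by
      intro R hR
      rw [Finset.mem_filter] at hR
      rw [Finset.mem_union, hZ, Finset.mem_filter, Finset.mem_filter]
      by_cases h : Q ≤ R
      · right; exact ⟨hR.1, hPQL ▸ sup_le hR.2 h⟩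
      · left; exact ⟨hR.1, hR.2, h⟩
    have c1 : (Y.filter (P ≤ ·)).card ≤ Z.card + (Y.filter (L ≤ ·)).card :=
      (Finset.card_le_card hsub).trans (Finset.card_union_le _ _)
    have c2 := count_ge k Y hdim L (by omega) (by omega)
    rw [hLr, hV, ← hq] at c2
    have c3 : Z.card ≤ q ^ (k - 1) * (Z.image (Submodule.map L.mkQ)).card := by
      refine Finset.card_le_mul_card_image Z _ fun X hX => ?_
      obtain ⟨R0, hR0, hRX⟩ := Finset.mem_image.1 hX
      have hXr : finrank F X = k - 1 := by
        rw [hZ, Finset.mem_filter] at hR0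
        rw [← hRX]; exact (f1 R0 hR0.1 hR0.2.1 hR0.2.2).2
      have hsupQ : ∀ R, P ≤ R → R ⊔ Q = R ⊔ L := fun R hR => by
        rw [← hPQL, ← sup_assoc, sup_eq_left.2 hR]
      have hcm : ∀ R, R.map L.mkQ = X → R ⊔ L = X.comap L.mkQ := fun R h => by
        rw [← h, Submodule.comap_map_mkQ, sup_comm]
      refine fibre_bound k hV P Q hQ hP (by omega) (X.comap L.mkQ) _ ?_ ?_
      · rw [hZ, Finset.mem_filter] at hR0
        rw [← hcm R0 hRX, ← hsupQ R0 hR0.2.1]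
        have a := Submodule.finrank_sup_add_finrank_inf_eq R0 Q
        have b : Q ⊓ R0 = ⊥ := point_inf_eq_bot Q R0 hQ hR0.2.2
        rw [inf_comm, b, finrank_bot, hdim R0 hR0.1, hQ] at a
        omega
      · intro R hR
        rw [Finset.mem_filter, hZ, Finset.mem_filter] at hR
        exact ⟨hdim R hR.1.1, hR.1.2.1, by rw [hsupQ R hR.1.2.1, hcm R hR.2]⟩
    have c1' : ((Y.filter (P ≤ ·)).card : ℚ) ≤ Z.card + (Y.filter (L ≤ ·)).card := by exact_mod_cast c1
    have c3' : (Z.card : ℚ) ≤ (q : ℚ) ^ (k - 1) * (Z.image (Submodule.map L.mkQ)).card := by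
      exact_mod_cast c3
    linarith
  obtain ⟨gP1, gP2⟩ := gen P Q hP hQ rfl
  obtain ⟨gQ1, gQ2⟩ := gen Q P hQ hP (sup_comm _ _)
  have hcross := cross_subspaces' (k - 1) (by omega) hVL
    ((Y.filter (fun R => P ≤ R ∧ ¬ Q ≤ R)).image (Submodule.map L.mkQ))
    ((Y.filter (fun R => Q ≤ R ∧ ¬ P ≤ R)).image (Submodule.map L.mkQ))
    (by
      intro A hA
      obtain ⟨R, hR, rfl⟩ := Finset.mem_image.1 hA
      rw [Finset.mem_filter] at hR
      exact (gP1 R hR.1 hR.2.1 hR.2.2).2)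
    (by
      intro A hA
      obtain ⟨R, hR, rfl⟩ := Finset.mem_image.1 hA
      rw [Finset.mem_filter] at hR
      exact (gQ1 R hR.1 hR.2.1 hR.2.2).2)
    (by
      intro A hA B hB hbot
      obtain ⟨R, hR, rfl⟩ := Finset.mem_image.1 hA
      obtain ⟨R', hR', rfl⟩ := Finset.mem_image.1 hB
      rw [Finset.mem_filter] at hR hR'
      obtain ⟨v, hv, hv0⟩ := Submodule.exists_mem_ne_zero_of_ne_bot (hint R hR.1 R' hR'.1)
      have hm : L.mkQ v ∈ R.map L.mkQ ⊓ R'.map L.mkQ :=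
        ⟨Submodule.mem_map_of_mem hv.1, Submodule.mem_map_of_mem hv.2⟩
      rw [hbot, Submodule.mem_bot, Submodule.mkQ_apply, Submodule.Quotient.mk_eq_zero] at hm
      have m1 : v ∈ P := by
        rw [← (gP1 R hR.1 hR.2.1 hR.2.2).1]; exact ⟨hv.1, hm⟩
      have m2 : v ∈ Q := by
        rw [← (gQ1 R' hR'.1 hR'.2.1 hR'.2.2).1]; exact ⟨hv.2, hm⟩
      have m3 : v ∈ P ⊓ Q := ⟨m1, m2⟩
      rw [hPQi, Submodule.mem_bot] at m3
      exact hv0 m3)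
  rw [← hq, hT] at hcross
  have hpos : (0 : ℚ) < (q : ℚ) ^ (k - 1) + 1 := by positivity
  have hq0 : (0 : ℚ) ≤ (q : ℚ) ^ (k - 1) := by positivity
  refine hcross.imp (fun h => ?_) (fun h => ?_)
  · have := le_of_mul_le_mul_right h hpos
    have := mul_le_mul_of_nonneg_right this hq0
    rw [hE]; linarith
  · have := le_of_mul_le_mul_right h hpos
    have := mul_le_mul_of_nonneg_right this hq0
    rw [hE]; linarith
end main


theorem numeric_big (q u K c x D : ℚ) (hq : 3 ≤ q) (hu : q ^ 3 ≤ u) (hK : K * (q - 1) = q ^ 2 * u - 1)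
    (hc : c * (q - 1) ≤ q * (u - 1)) (hD : D = q ^ 2 * u ^ 2 - 1) (hx : 0 < x) :
    K * (K * (x * (u - 1))) + c * (q * u * (x * (q ^ 2 * u - 1)) + x * D) <
      (1 + 3 / q) * K * (x * D) := by
  have hu1 : 1 ≤ u := by
    have : (3:ℚ) ^ 3 ≤ q ^ 3 := by gcongr
    linarith
  have hq1 : 0 < q - 1 := by linarith
  have hq0 : 0 < q := by linarith
  have hqu : q ≤ q ^ 2 * u := by nlinarith
  have hKpos : 0 < K := by
    by_contra h
    have : K * (q - 1) ≤ 0 := mul_nonpos_of_nonpos_of_nonneg (by linarith) hq1.le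
    linarith
  have hDpos : 0 < D := by
    rw [hD]; nlinarith [mul_le_mul hqu hu1 (by linarith) (by positivity)]
  have t1 : K * (u - 1) * (2 * q) ≤ 3 * D := by
    have a : K * (u - 1) * (q - 1) ≤ D := by
      have : K * (u - 1) * (q - 1) = (q ^ 2 * u - 1) * (u - 1) := by rw [← hK]; ring
      rw [this, hD]; nlinarith
    have b : 0 ≤ K * (u - 1) := mul_nonneg hKpos.le (by linarith)
    nlinarith
  have t2 : c * (q * u * (q ^ 2 * u - 1)) ≤ D * K := by
    rw [← hK]
    have a : c * (q - 1) * (q * u) ≤ D := by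
      have : c * (q - 1) * (q * u) ≤ q * (u - 1) * (q * u) :=
        mul_le_mul_of_nonneg_right hc (by positivity)
      rw [hD]; nlinarith
    have := mul_le_mul_of_nonneg_right a hKpos.le
    linarith
  have t3 : c * q ≤ K := by
    have : c * q * (q - 1) ≤ K * (q - 1) := by
      rw [hK]; nlinarith
    exact le_of_mul_le_mul_right this hq1
  have e : (1 + 3 / q) * K * (x * D) = (q + 3) * K * D * x / q := by field_simp
  rw [e, lt_div_iff₀ hq0]
  have t1' := mul_le_mul_of_nonneg_left t1 hKpos.le
  have t2' := mul_le_mul_of_nonneg_right t2 hq0.le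
  have t3' := mul_le_mul_of_nonneg_right t3 hDpos.le
  have hKD := mul_pos hKpos hDpos
  have fin : (K * (K * (u - 1)) + c * (q * u * (q ^ 2 * u - 1) + D)) * q < (q + 3) * K * D := by
    linarith
  have := mul_lt_mul_of_pos_right fin hx
  linarith

theorem numeric_two (q u K x D : ℚ) (hq : 3 ≤ q) (hu : q ^ 3 ≤ u) (hK : K * (q - 1) = q ^ 2 * u - 1)
    (hD : D = q ^ 2 * u ^ 2 - 1) (hx : 0 < x) :
    K * (x * D) + q * (q * u * (x * (q ^ 2 * u - 1)) + x * D) <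
      (1 + 3 / q) * K * (x * D) := by
  have hu1 : 1 ≤ u := by
    have : (3:ℚ) ^ 3 ≤ q ^ 3 := by gcongr
    linarith
  have hq1 : 0 < q - 1 := by linarith
  have hq0 : 0 < q := by linarith
  have hqu : q ≤ q ^ 2 * u := by nlinarith
  have hKpos : 0 < K := by
    by_contra h
    have : K * (q - 1) ≤ 0 := mul_nonpos_of_nonpos_of_nonneg (by linarith) hq1.le
    linarith
  have hDpos : 0 < D := by
    rw [hD]; nlinarith [mul_le_mul hqu hu1 (by linarith) (by positivity)]
  have h5 : q ^ 2 * u * q ^ 3 ≤ q ^ 2 * u * u := mul_le_mul_of_nonneg_left hu (by positivity)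
  have h6 : (3:ℚ) ^ 2 * 1 ≤ q ^ 2 * u := by gcongr
  have h7 : q ^ 2 * q ^ 3 ≤ q ^ 2 * u := mul_le_mul_of_nonneg_left hu (by positivity)
  have h8 : q ^ 3 * 3 ≤ q ^ 3 * q := mul_le_mul_of_nonneg_left hq (by positivity)
  have h9 : q ^ 4 * 3 ≤ q ^ 4 * q := mul_le_mul_of_nonneg_left hq (by positivity)
  have h10 : (27:ℚ) ≤ q ^ 3 := by
    have : (3:ℚ) ^ 3 ≤ q ^ 3 := by gcongr
    linarith
  have t2 : q * (q * u * (q ^ 2 * u - 1)) * q ≤ D * K := by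
    rw [← hK]
    have a : q ^ 3 * u * (q - 1) ≤ D := by
      rw [hD]
      have : q ^ 2 * u * (q * (q - 1)) ≤ q ^ 2 * u * (q ^ 3 - 1) :=
        mul_le_mul_of_nonneg_left (by nlinarith) (by positivity)
      nlinarith
    have := mul_le_mul_of_nonneg_right a hKpos.le
    linarith
  have t3 : q * q ≤ K := by
    have : q * q * (q - 1) ≤ K * (q - 1) := by
      rw [hK]; nlinarith
    exact le_of_mul_le_mul_right this hq1
  have e : (1 + 3 / q) * K * (x * D) = (q + 3) * K * D * x / q := by field_simp
  rw [e, lt_div_iff₀ hq0]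
  have t3' := mul_le_mul_of_nonneg_right t3 hDpos.le
  have hKD := mul_pos hKpos hDpos
  have fin : (K * D + q * (q * u * (q ^ 2 * u - 1) + D)) * q < (q + 3) * K * D := by
    linarith
  have := mul_lt_mul_of_pos_right fin hx
  linarith

section main
variable {F V : Type*} [Field F] [Fintype F] [AddCommGroup V] [Module F V] [Finite V]

open Classical in
theorem cover_bound (s : ℕ) (Y : Finset (Submodule F V)) (S : Submodule F V)
    (hS : finrank F S = s) (hs : 1 ≤ s) (hcov : ∀ R ∈ Y, S ⊓ R ≠ ⊥) (B E : ℚ)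
    (hB : ∀ P : Submodule F V, finrank F P = 1 → ((Y.filter (P ≤ ·)).card : ℚ) ≤ B)
    (hE : ∀ P Q : Submodule F V, finrank F P = 1 → finrank F Q = 1 → P ≠ Q →
      ((Y.filter (P ≤ ·)).card : ℚ) ≤ E ∨ ((Y.filter (Q ≤ ·)).card : ℚ) ≤ E) :
    (Y.card : ℚ) ≤ B + (gaussBinom (Fintype.card F) s 1 - 1) * E := by
  have : Fintype (Submodule F V) := Fintype.ofFinite _
  have hc := card_points S (by omega)
  rw [hS, Nat.card_eq_fintype_card, Fintype.card_subtype] at hc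
  set pts := Finset.univ.filter (fun P : Submodule F V => finrank F P = 1 ∧ P ≤ S) with hpts
  have hmem : ∀ P ∈ pts, finrank F P = 1 := fun P hP => by
    rw [hpts, Finset.mem_filter] at hP; exact hP.2.1
  have hsub : Y ⊆ pts.biUnion (fun Q => Y.filter (Q ≤ ·)) := by
    intro R hR
    obtain ⟨Q, hQ1, hQ2⟩ := exists_point_le _ (hcov R hR)
    rw [Finset.mem_biUnion]
    refine ⟨Q, by rw [hpts, Finset.mem_filter]; exact ⟨Finset.mem_univ _, hQ1, hQ2.trans inf_le_left⟩, ?_⟩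
    rw [Finset.mem_filter]
    exact ⟨hR, hQ2.trans inf_le_right⟩
  obtain ⟨P0, hP0, hP0'⟩ : ∃ P0 ∈ pts, ∀ Q ∈ pts, Q ≠ P0 → ((Y.filter (Q ≤ ·)).card : ℚ) ≤ E := by
    by_cases h : ∃ P0 ∈ pts, E < ((Y.filter (P0 ≤ ·)).card : ℚ)
    · obtain ⟨P0, h1, h2⟩ := h
      refine ⟨P0, h1, fun Q hQ hne => ?_⟩
      exact (hE P0 Q (hmem _ h1) (hmem _ hQ) hne.symm).resolve_left (not_le.2 h2)
    · push Not at h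
      have hne : S ≠ ⊥ := by
        rintro rfl
        rw [finrank_bot] at hS; omega
      obtain ⟨P0, h1, h2⟩ := exists_point_le S hne
      exact ⟨P0, by rw [hpts, Finset.mem_filter]; exact ⟨Finset.mem_univ _, h1, h2⟩, fun Q hQ _ => h Q hQ⟩
  calc (Y.card : ℚ) ≤ ((pts.biUnion (fun Q => Y.filter (Q ≤ ·))).card : ℚ) :=
        Nat.cast_le.2 (Finset.card_le_card hsub)
    _ ≤ ((∑ Q ∈ pts, (Y.filter (Q ≤ ·)).card : ℕ) : ℚ) := Nat.cast_le.2 Finset.card_biUnion_le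
    _ = ∑ Q ∈ pts, ((Y.filter (Q ≤ ·)).card : ℚ) := by push_cast; rfl
    _ = ((Y.filter (P0 ≤ ·)).card : ℚ) + ∑ Q ∈ pts.erase P0, ((Y.filter (Q ≤ ·)).card : ℚ) :=
        (Finset.add_sum_erase _ _ hP0).symm
    _ ≤ B + ∑ Q ∈ pts.erase P0, E := by
        refine add_le_add (hB _ (hmem _ hP0)) (Finset.sum_le_sum fun Q hQ => ?_)
        rw [Finset.mem_erase] at hQ
        exact hP0' Q hQ.2 hQ.1
    _ = _ := by
        rw [Finset.sum_const, nsmul_eq_mul, Finset.card_erase_of_mem hP0,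
          Nat.cast_sub (Finset.card_pos.2 ⟨P0, hP0⟩), hc, Nat.cast_one]

theorem main_finset (k s : ℕ) (hq : 3 ≤ Fintype.card F) (hk : 5 ≤ k) (hV : finrank F V = 2 * k)
    (Y : Finset (Submodule F V)) (hdim : ∀ R ∈ Y, finrank F R = k)
    (hint : ∀ R ∈ Y, ∀ S ∈ Y, R ⊓ S ≠ ⊥)
    (S : Submodule F V) (hS : finrank F S = s) (hs2 : 2 ≤ s) (hsk : s ≤ k - 1)
    (hcov : ∀ R ∈ Y, S ⊓ R ≠ ⊥)
    (hmin : ∀ W : Submodule F V, finrank F W < s → ∃ R ∈ Y, W ⊓ R = ⊥) :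
    (Y.card : ℚ) < (1 + 3 / (Fintype.card F : ℚ)) * gaussBinom (Fintype.card F) k 1 *
      gaussBinom (Fintype.card F) (2 * k - 2) (k - 2) := by
  classical
  set n := Fintype.card F with hn
  have hqQ : (3:ℚ) ≤ (n:ℚ) := by exact_mod_cast hq
  obtain ⟨j, rfl⟩ : ∃ j, k = j + 3 := ⟨k - 3, by omega⟩
  set q : ℚ := (n : ℚ) with hqdef
  set u : ℚ := q ^ (j + 1) with hudef
  have hu : q ^ 3 ≤ u := pow_le_pow_right₀ (by linarith) (by omega)
  have hu27 : 27 ≤ u := by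
    have : (3:ℚ) ^ 3 ≤ q ^ 3 := by gcongr
    linarith
  have hq1 : 0 < q - 1 := by linarith
  have hgb1 : ∀ m, gaussBinom n m 1 * (q - 1) = q ^ m - 1 := fun m => by
    rw [gb_one, ← hqdef]; exact div_mul_cancel₀ _ hq1.ne'
  set K := gaussBinom n (j + 3) 1 with hKdef
  have hK : K * (q - 1) = q ^ 2 * u - 1 := by
    rw [hKdef, hgb1, hudef]; ring
  have hKpos : 0 < K := gb_pos n _ _ (by omega) (by omega)
  set D : ℚ := q ^ 2 * u ^ 2 - 1 with hD
  have hDpos : 0 < D := by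
    have h1 : (3:ℚ) ^ 2 * 27 ^ 2 ≤ q ^ 2 * u ^ 2 := by gcongr
    rw [hD]; linarith
  set M := gaussBinom n (2 * (j + 3) - 2) (j + 3 - 2) with hMdef
  have hMpos : 0 < M := gb_pos n _ _ (by omega) (by omega)
  set x := M / D with hx
  have hxpos : 0 < x := div_pos hMpos hDpos
  have hMx : M = x * D := by rw [hx]; field_simp
  have hM3 : gaussBinom n (2 * (j + 3) - 3) (j + 3 - 3) = x * (u - 1) := by
    have h := gb_succ_succ n (2 * (j + 3) - 3) j (by omega)
    have e1 : 2 * (j + 3) - 3 + 1 = 2 * (j + 3) - 2 := by omega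
    have e2 : j + 1 = j + 3 - 2 := by omega
    have e3 : q ^ (2 * (j + 3) - 2) - 1 = D := by
      rw [hD, hudef, ← pow_mul, ← pow_add]; congr 2; omega
    rw [e1] at h
    rw [e3] at h
    change M * (u - 1) = _ at h
    have : j + 3 - 3 = j := by omega
    rw [this]
    rw [hMx] at h
    have h' : (x * (u - 1)) * D = gaussBinom n (2 * (j + 3) - 3) j * D := by linarith
    exact (mul_right_cancel₀ hDpos.ne' h').symm
  have hT : gaussBinom n (2 * (j + 3 - 1)) (j + 3 - 1) =
      (x * (q ^ 2 * u - 1)) * (q ^ (j + 3 - 1) + 1) := by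
    have h := gb_succ n (2 * (j + 3) - 2) (j + 1) (by omega)
    have e1 : 2 * (j + 3 - 1) = 2 * (j + 3) - 2 := by omega
    have e2 : j + 3 - 1 = j + 1 + 1 := by omega
    have e3 : 2 * (j + 3) - 2 - (j + 1) = j + 3 := by omega
    rw [e3] at h
    rw [e1, e2]
    change _ = M * _ at h
    rw [hMx] at h
    have e4 : q ^ (j + 1 + 1) = q * u := by rw [hudef]; ring
    have e5 : q ^ (j + 3) = q ^ 2 * u := by rw [hudef]; ring
    rw [← hqdef, e4, e5] at h
    rw [e4]
    have hne : q * u - 1 ≠ 0 := by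
      have : 0 < q * u - 1 := by nlinarith
      exact this.ne'
    apply mul_right_cancel₀ hne
    rw [h, hD]; ring
  have hEq : q ^ (j + 3 - 1) = q * u := by
    rw [hudef, show j + 3 - 1 = j + 1 + 1 by omega]; ring
  have hE := fun P Q hP hQ hPQ => pair_bound (j + 3) (by omega) hV Y hdim hint P Q hP hQ hPQ
    (x * (q ^ 2 * u - 1)) (q * u * (x * (q ^ 2 * u - 1)) + x * D) hT
    (by rw [← hMx, ← hn, ← hqdef, hEq])
  have hstep := count_step (j + 3) (by omega) Y hdim hint
  have hVW := fun W hW => count_ge (j + 3) Y hdim W hW (by omega)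
  rw [hV] at hVW
  rcases eq_or_lt_of_le hs2 with h2 | h3
  · have hB : ∀ P : Submodule F V, finrank F P = 1 → ((Y.filter (P ≤ ·)).card : ℚ) ≤ K * (x * D) := by
      intro P hP
      obtain ⟨R1, hR1, hPR⟩ := hmin P (by omega)
      refine hstep P R1 hR1 hPR _ fun W hW _ => ?_
      have := hVW W (by omega)
      rw [hW, hP] at this
      rw [← hMx]; exact this
    have hfin := cover_bound s Y S hS (by omega) hcov _ _ hB hE
    have hc : gaussBinom n s 1 - 1 = q := by
      have := hgb1 s
      rw [← h2] at this ⊢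
      have h' : (gaussBinom n 2 1 - 1) * (q - 1) = q * (q - 1) := by linarith
      exact mul_right_cancel₀ hq1.ne' h'
    rw [← hn, hc] at hfin
    rw [hMx]
    exact lt_of_le_of_lt hfin (numeric_two q u K x D hqQ hu hK hD hxpos)
  · have hB : ∀ P : Submodule F V, finrank F P = 1 →
        ((Y.filter (P ≤ ·)).card : ℚ) ≤ K * (K * (x * (u - 1))) := by
      intro P hP
      obtain ⟨R1, hR1, hPR⟩ := hmin P (by omega)
      refine hstep P R1 hR1 hPR _ fun W hW _ => ?_
      obtain ⟨R2, hR2, hWR⟩ := hmin W (by omega)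
      refine hstep W R2 hR2 hWR _ fun W' hW' _ => ?_
      have := hVW W' (by omega)
      rw [hW', hW, hP] at this
      rw [← hM3]; exact this
    have hfin := cover_bound s Y S hS (by omega) hcov _ _ hB hE
    have hc : (gaussBinom n s 1 - 1) * (q - 1) ≤ q * (u - 1) := by
      have h1 := hgb1 s
      have : q ^ s ≤ q ^ (j + 2) := pow_le_pow_right₀ (by linarith) (by omega)
      have e : q ^ (j + 2) = q * u := by rw [hudef]; ring
      linarith
    rw [← hn] at hfin
    rw [hMx]
    exact lt_of_le_of_lt hfin (numeric_big q u K _ x D hqQ hu hK hc hD hxpos)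
end main

/-- Lemma 3.5: for `q ≥ 3, k ≥ 5` (or `q ≥ 5, k ≥ 6`), if `Y` is an intersecting family of
`k`-spaces of `F_q^{2k}` of size at least `(1 + 3q^{-1})·[k choose 1]_q·[2k-2 choose k-2]_q`,
and `s` is the minimum dimension of a subspace meeting every member of `Y` nontrivially,
then `s = 1` or `s = k`. -/
theorem min_covering_dimension (q k : ℕ) (hq : IsPrimePow q)
    (hqk : (3 ≤ q ∧ 5 ≤ k) ∨ (5 ≤ q ∧ 6 ≤ k))
    (F : Type) [Field F] [Fintype F] (hF : Fintype.card F = q)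
    (Y : Set (Submodule F (Fin (2 * k) → F)))
    (hdim : ∀ R ∈ Y, Module.finrank F R = k)
    (hint : ∀ R ∈ Y, ∀ S ∈ Y, R ⊓ S ≠ ⊥)
    (hsize : (Nat.card Y : ℚ) ≥
      (1 + 3 / (q : ℚ)) * gaussBinom q k 1 * gaussBinom q (2 * k - 2) (k - 2))
    (s : ℕ)
    (hs : IsLeast {d : ℕ | ∃ S : Submodule F (Fin (2 * k) → F),
      Module.finrank F S = d ∧ ∀ R ∈ Y, S ⊓ R ≠ ⊥} s) :
    s = 1 ∨ s = k := by
  classical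
  have hq3 : 3 ≤ q := by omega
  have hk5 : 5 ≤ k := by omega
  have hqQ : (3:ℚ) ≤ (q:ℚ) := by exact_mod_cast hq3
  have hpos : 0 < (1 + 3 / (q : ℚ)) * gaussBinom q k 1 * gaussBinom q (2 * k - 2) (k - 2) := by
    have a := gb_pos q k 1 (by omega) (by omega)
    have b := gb_pos q (2 * k - 2) (k - 2) (by omega) (by omega)
    positivity
  have hne : Y.Nonempty := by
    by_contra h
    rw [Set.not_nonempty_iff_eq_empty] at h
    rw [h] at hsize
    simp only [Nat.card_eq_fintype_card, Fintype.card_eq_zero, Nat.cast_zero] at hsize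
    linarith
  obtain ⟨R0, hR0⟩ := hne
  obtain ⟨⟨S, hS, hcov⟩, hleast⟩ := hs
  have hsk : s ≤ k := hleast ⟨R0, hdim R0 hR0, fun R hR => hint R0 hR0 R hR⟩
  have hs1 : 1 ≤ s := by
    by_contra h
    have h0 : finrank F S = 0 := by omega
    rw [Submodule.finrank_eq_zero] at h0
    exact hcov R0 hR0 (by rw [h0, bot_inf_eq])
  by_contra hcon
  push Not at hcon
  have hfinY : Y.Finite := Set.toFinite Y
  have key := main_finset (F := F) (V := Fin (2 * k) → F) k s (by omega) hk5 (by simp) hfinY.toFinset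
    (fun R hR => hdim R (hfinY.mem_toFinset.1 hR))
    (fun R hR R' hR' => hint R (hfinY.mem_toFinset.1 hR) R' (hfinY.mem_toFinset.1 hR'))
    S hS (by omega) (by omega) (fun R hR => hcov R (hfinY.mem_toFinset.1 hR))
    (by
      intro W hW
      by_contra hno
      push Not at hno
      have : s ≤ finrank F W := hleast ⟨W, rfl, fun R hR => hno R (hfinY.mem_toFinset.2 hR)⟩
      omega)
  rw [hF] at key
  have hcard : Nat.card Y = hfinY.toFinset.card := by
    rw [Nat.card_coe_set_eq, Set.ncard_eq_toFinset_card Y hfinY]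
  rw [hcard] at hsize
  linarith
end
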